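/- arXiv:1203.4450 — 4 statements merged into one kernel-verified Lean document; each statement's English description precedes it below -/
import Mathlib

section
/- Let (R,m) be a Noetherian local ring and I an ideal of R. Let x_1,…,x_s,y be a minimal generating set of I, where J=(x_1,…,x_s) is a reduction of I with reduction number r = r_J(I). Assume that for all n ≥ 2 and all i = 1,…,s one has ((x_1,…,x_{i-1})I^{n-1} : x_i) ∩ I^{n-1} = (x_1,…,x_{i-1})I^{n-2}. Then for each n ≥ 2 the map sending a homogeneous F ∈ Q_n to F(0,…,0,1) ∈ (JI^{n-1} : y^n) induces an isomorphism of R-modules (Q/Q⟨n-1⟩)_n ≅ (JI^{n-1} : y^n)/(JI^{n-2} : y^{n-1}). In particular rt(I) = r_J(I) + 1, and there is a form Y^{r+1} − Σ_i X_i F_i ∈ Q_{r+1}, with each F_i homogeneous of degree r, such that Q = (Y^{r+1} − Σ_i X_i F_i) + Q⟨r⟩. -/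
open MvPolynomial

section Defs

variable {R : Type*} [CommRing R]

/-- The presentation of the Rees algebra of the ideal generated by `g`,
sending the `i`-th variable to `(g i) · t` inside `R[t]`. -/
noncomputable def reesPres {m : ℕ} (g : Fin m → R) :
    MvPolynomial (Fin m) R →ₐ[R] Polynomial R :=
  aeval fun i => Polynomial.C (g i) * Polynomial.X

/-- `Q`, the ideal of equations of the Rees algebra w.r.t. the generators `g`. -/
noncomputable def presKer {m : ℕ} (g : Fin m → R) : Ideal (MvPolynomial (Fin m) R) :=
  RingHom.ker (reesPres g)

/-- `Q⟨d⟩`, the subideal of `Q` generated by the homogeneous equations of degree at most `d`. -/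
noncomputable def presKerLe {m : ℕ} (g : Fin m → R) (d : ℕ) : Ideal (MvPolynomial (Fin m) R) :=
  Ideal.span {F | F ∈ presKer g ∧ ∃ k ≤ d, F.IsHomogeneous k}

/-- `Q_n`, the `R`-module of homogeneous equations of degree `n`. -/
noncomputable def presKerHomog {m : ℕ} (g : Fin m → R) (n : ℕ) :
    Submodule R (MvPolynomial (Fin m) R) :=
  homogeneousSubmodule (Fin m) R n ⊓ (presKer g).restrictScalars R

/-- `(Q/Q⟨n-1⟩)_n`, the degree-`n` part of `Q/Q⟨n-1⟩`. -/
abbrev presE {m : ℕ} (g : Fin m → R) (n : ℕ) :=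
  presKerHomog g n ⧸
    Submodule.comap (presKerHomog g n).subtype ((presKerLe g (n - 1)).restrictScalars R)

end Defs


section Helpers
variable {R : Type*} [CommRing R]

lemma reesPres_homog {m : ℕ} (g : Fin m → R) {F : MvPolynomial (Fin m) R} {n : ℕ}
    (hF : F.IsHomogeneous n) : reesPres g F = Polynomial.C (eval g F) * Polynomial.X ^ n := by
  unfold reesPres
  rw [aeval_def, eval₂_eq, eval_eq, map_sum, Finset.sum_mul]
  refine Finset.sum_congr rfl fun d hd => ?_
  have h1 : d.degree = n := by
    by_contra h
    exact (mem_support_iff.1 hd) (hF.coeff_eq_zero h)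
  simp only [mul_pow, Finset.prod_mul_distrib, map_mul, map_prod, map_pow]
  rw [Finset.prod_pow_eq_pow_sum]
  have h2 : ∑ i ∈ d.support, d i = n := by rw [← h1]; rfl
  rw [h2, mul_assoc]
  rfl

lemma mem_presKer_homog {m : ℕ} (g : Fin m → R) {F : MvPolynomial (Fin m) R} {n : ℕ}
    (hF : F.IsHomogeneous n) : F ∈ presKer g ↔ eval g F = 0 := by
  unfold presKer
  rw [RingHom.mem_ker, reesPres_homog g hF]
  constructor
  · intro h
    have := congrArg (fun p => Polynomial.coeff p n) h
    simpa using this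
  · intro h
    simp [h]

lemma presKer_component {m : ℕ} (g : Fin m → R) {F : MvPolynomial (Fin m) R}
    (hF : F ∈ presKer g) (n : ℕ) : homogeneousComponent n F ∈ presKer g := by
  rw [mem_presKer_homog g (homogeneousComponent_isHomogeneous n F)]
  have h0 : reesPres g F = 0 := hF
  rw [← sum_homogeneousComponent F, map_sum] at h0
  by_cases hn : n < F.totalDegree + 1
  · have := congrArg (fun p => Polynomial.coeff p n) h0
    simp only [Polynomial.finsetSum_coeff, Polynomial.coeff_zero] at this
    rw [Finset.sum_eq_single n] at this
    · rw [reesPres_homog g (homogeneousComponent_isHomogeneous n F)] at this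
      simpa using this
    · intro b _ hb
      rw [reesPres_homog g (homogeneousComponent_isHomogeneous b F)]
      simp [Polynomial.coeff_X_pow, Ne.symm hb]
    · intro h
      exact absurd (Finset.mem_range.2 hn) h
  · rw [homogeneousComponent_eq_zero n F (by omega)]
    simp

lemma presKer_le_of_homog {m : ℕ} (g : Fin m → R) (A : Ideal (MvPolynomial (Fin m) R))
    (h : ∀ n F, F.IsHomogeneous n → F ∈ presKer g → F ∈ A) : presKer g ≤ A := by
  intro F hF
  rw [← sum_homogeneousComponent F]
  exact Ideal.sum_mem _ fun n _ => h n _ (homogeneousComponent_isHomogeneous n F)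
    (presKer_component g hF n)

lemma presKerLe_le {m : ℕ} (g : Fin m → R) (d : ℕ) : presKerLe g d ≤ presKer g :=
  Ideal.span_le.2 fun _ h => h.1

lemma presKerLe_mono {m : ℕ} (g : Fin m → R) {d e : ℕ} (h : d ≤ e) :
    presKerLe g d ≤ presKerLe g e :=
  Ideal.span_mono fun _ hF => ⟨hF.1, hF.2.imp fun _ hk => ⟨hk.1.trans h, hk.2⟩⟩

lemma exists_sum_of_mem_mul {s : ℕ} (x : Fin s → R) (S : Set (Fin s)) (A : Ideal R) {a : R}
    (ha : a ∈ Ideal.span (x '' S) * A) :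
    ∃ b : Fin s → R, (∀ j, b j ∈ A) ∧ (∀ j, j ∉ S → b j = 0) ∧ a = ∑ j, x j * b j := by
  classical
  rw [mul_comm] at ha
  obtain ⟨c, hc, hs⟩ := (Submodule.mem_ideal_smul_span_iff_exists_sum' A S x a).1 ha
  refine ⟨fun j => if h : j ∈ S then c ⟨j, h⟩ else 0, ?_, ?_, ?_⟩
  · intro j
    by_cases h : j ∈ S
    · simp [h, hc]
    · simp [h]
  · intro j h
    simp [h]
  · rw [← hs, Finsupp.sum_fintype _ _ (by simp)]
    have : ∀ j, x j * (if h : j ∈ S then c ⟨j, h⟩ else 0)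
      = if h : j ∈ S then c ⟨j, h⟩ • x j else 0 := by
      intro j
      by_cases h : j ∈ S
      · simp [h, mul_comm]
      · simp [h]
    simp only [this]
    rw [Finset.sum_dite]
    simp only [Finset.sum_const_zero, add_zero]
    refine Finset.sum_bij (fun a _ => ⟨a.1, by simp⟩) ?_ ?_ ?_ ?_
    · simp
    · intro a _ b _ h
      simpa [Subtype.ext_iff] using h
    · intro b _
      exact ⟨⟨b.1, (Finset.mem_filter.1 b.2).2⟩, Finset.mem_univ _, rfl⟩
    · intro a _
      rfl

/-- decomposition of a form. -/
lemma form_decomp {s n : ℕ} {F : MvPolynomial (Fin (s + 1)) R} (hF : F.IsHomogeneous (n + 1)) :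
    ∃ H : Fin s → MvPolynomial (Fin (s + 1)) R, (∀ i, (H i).IsHomogeneous n) ∧
      F = C (eval (Function.update (0 : Fin (s + 1) → R) (Fin.last s) 1) F)
        * X (Fin.last s) ^ (n + 1) + ∑ i : Fin s, X i.castSucc * H i := by
  classical
  have key : ∀ d : Fin (s + 1) →₀ ℕ, d.degree = n + 1 → ∀ a : R,
      ∃ H : Fin s → MvPolynomial (Fin (s + 1)) R, (∀ i, (H i).IsHomogeneous n) ∧
      monomial d a =
        C (eval (Function.update (0 : Fin (s + 1) → R) (Fin.last s) 1) (monomial d a))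
        * X (Fin.last s) ^ (n + 1) + ∑ i : Fin s, X i.castSucc * H i := by
    intro d hd a
    by_cases h : ∃ i : Fin s, d i.castSucc ≠ 0
    · obtain ⟨i, hi⟩ := h
      have hle : Finsupp.single i.castSucc 1 ≤ d := by
        rw [Finsupp.single_le_iff]; omega
      have hd' : d = Finsupp.single i.castSucc 1 + (d - Finsupp.single i.castSucc 1) :=
        (add_tsub_cancel_of_le hle).symm
      refine ⟨fun j => if j = i then monomial (d - Finsupp.single i.castSucc 1) a else 0, ?_, ?_⟩
      · intro j
        dsimp only
        split_ifs
        · apply isHomogeneous_monomial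
          have := congrArg Finsupp.degree hd'
          rw [map_add, Finsupp.degree_single, hd] at this
          omega
        · exact isHomogeneous_zero _ _ _
      · have e0 : eval (Function.update (0 : Fin (s + 1) → R) (Fin.last s) 1) (monomial d a)
            = 0 := by
          rw [eval_monomial, Finsupp.prod]
          rw [Finset.prod_eq_zero (i := i.castSucc)]
          · simp
          · simpa using hi
          · rw [Function.update_of_ne (Fin.castSucc_lt_last i).ne]
            simp [hi]
        rw [e0]
        simp only [map_zero, zero_mul, zero_add, mul_ite, mul_zero, Finset.sum_ite_eq',
          Finset.mem_univ, if_true]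
        rw [X, monomial_mul, one_mul, ← hd']
    · push Not at h
      have hd' : d = Finsupp.single (Fin.last s) (n + 1) := by
        have h1 : d = Finsupp.single (Fin.last s) (d (Fin.last s)) := by
          ext j
          refine Fin.lastCases ?_ (fun i => ?_) j
          · simp
          · rw [h i, Finsupp.single_eq_of_ne (Fin.castSucc_lt_last i).ne]
        have h2 := congrArg Finsupp.degree h1
        rw [Finsupp.degree_single, hd] at h2
        rw [h1, ← h2]
      refine ⟨0, fun i => isHomogeneous_zero _ _ _, ?_⟩
      subst hd'
      have : eval (Function.update (0 : Fin (s + 1) → R) (Fin.last s) 1)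
          (monomial (Finsupp.single (Fin.last s) (n + 1)) a) = a := by
        rw [eval_monomial, Finsupp.prod_single_index (by simp)]
        simp
      rw [this, C_mul_X_pow_eq_monomial]
      simp
  have hmon : ∀ d ∈ F.support, d.degree = n + 1 := by
    intro d hd
    by_contra h
    exact (mem_support_iff.1 hd) (hF.coeff_eq_zero h)
  rw [F.as_sum]
  refine Finset.sum_induction _ (fun F : MvPolynomial (Fin (s + 1)) R =>
    ∃ H : Fin s → MvPolynomial (Fin (s + 1)) R, (∀ i, (H i).IsHomogeneous n) ∧
      F = C (eval (Function.update (0 : Fin (s + 1) → R) (Fin.last s) 1) F)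
        * X (Fin.last s) ^ (n + 1) + ∑ i : Fin s, X i.castSucc * H i) ?_ ?_ ?_
  · rintro p q ⟨H, hH, hp⟩ ⟨K, hK, hq⟩
    refine ⟨fun i => H i + K i, fun i => (hH i).add (hK i), ?_⟩
    simp only [mul_add, Finset.sum_add_distrib, map_add]
    linear_combination hp + hq
  · exact ⟨0, fun i => isHomogeneous_zero _ _ _, by simp⟩
  · intro d hd
    exact key d (hmon d hd) _

lemma eval_snoc_sum {s : ℕ} (x : Fin s → R) (y : R)
    (H : Fin s → MvPolynomial (Fin (s + 1)) R) :
    eval (Fin.snoc x y : Fin (s + 1) → R) (∑ i : Fin s, X i.castSucc * H i)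
      = ∑ i, x i * eval (Fin.snoc x y : Fin (s + 1) → R) (H i) := by
  simp [map_sum]

lemma homog_sum {s n : ℕ} {H : Fin s → MvPolynomial (Fin (s + 1)) R}
    (hH : ∀ i, (H i).IsHomogeneous n) :
    (∑ i : Fin s, X i.castSucc * H i : MvPolynomial (Fin (s + 1)) R).IsHomogeneous (n + 1) := by
  refine IsHomogeneous.sum _ _ _ fun i _ => ?_
  exact (add_comm 1 n) ▸ (isHomogeneous_X R i.castSucc).mul (hH i)

lemma eval_mem_pow {s n : ℕ} (g : Fin s → R) {F : MvPolynomial (Fin s) R}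
    (hF : F.IsHomogeneous n) : eval g F ∈ (Ideal.span (Set.range g)) ^ n :=
  (Ideal.mem_span_pow_iff_exists_isHomogeneous g _).2 ⟨F, hF, rfl⟩

lemma key_claim {s : ℕ} (x : Fin s → R) (y : R) (I : Ideal R)
    (hgen : I = Ideal.span (Set.range (Fin.snoc x y : Fin (s + 1) → R)))
    (m : ℕ)
    (hT : ∀ i : Fin s,
      (Ideal.span (x '' {j | j < i}) * I ^ (m + 1)).colon (Ideal.span {x i}) ⊓ I ^ (m + 1)
        = Ideal.span (x '' {j | j < i}) * I ^ m) (t : ℕ) :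
    ∀ H : Fin s → MvPolynomial (Fin (s + 1)) R, (∀ i, (H i).IsHomogeneous (m + 1)) →
      (∀ i : Fin s, t ≤ i.val → H i = 0) →
      (∑ i : Fin s, X i.castSucc * H i) ∈ presKer (Fin.snoc x y : Fin (s + 1) → R) →
      (∑ i : Fin s, X i.castSucc * H i) ∈ presKerLe (Fin.snoc x y : Fin (s + 1) → R) (m + 1) := by
  classical
  induction t with
  | zero =>
    intro H _ h0 _
    have : (∑ i : Fin s, X i.castSucc * H i : MvPolynomial (Fin (s + 1)) R) = 0 :=
      Finset.sum_eq_zero fun i _ => by rw [h0 i (Nat.zero_le _), mul_zero]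
    rw [this]
    exact Ideal.zero_mem _
  | succ t ih =>
    intro H hH h0 hQ
    by_cases hts : t < s
    swap
    · exact ih H hH (fun i hi => absurd i.2 (by omega)) hQ
    let i : Fin s := ⟨t, hts⟩
    let g : Fin (s + 1) → R := Fin.snoc x y
    have hI : ∀ j, eval g (H j) ∈ I ^ (m + 1) := fun j => hgen ▸ eval_mem_pow g (hH j)
    have hz := (mem_presKer_homog g (homog_sum hH)).1 hQ
    rw [eval_snoc_sum, ← Finset.add_sum_erase _ _ (Finset.mem_univ i)] at hz
    have h1 : eval g (H i) ∈ Ideal.span (x '' {j | j < i}) * I ^ m := by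
      rw [← hT i]
      refine ⟨?_, hI i⟩
      rw [SetLike.mem_coe, Ideal.mem_colon_span_singleton]
      have : eval g (H i) * x i = -∑ j ∈ Finset.univ.erase i, x j * eval g (H j) := by
        linear_combination hz
      rw [this]
      refine neg_mem (Ideal.sum_mem _ fun j hj => ?_)
      rcases lt_or_gt_of_ne (Finset.ne_of_mem_erase hj) with hlt | hgt
      · exact Ideal.mul_mem_mul (Ideal.subset_span ⟨j, hlt, rfl⟩) (hI j)
      · rw [h0 j (by exact hgt)]
        simp
    obtain ⟨b, hb, hb0, hbs⟩ := exists_sum_of_mem_mul _ _ _ h1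
    have hex : ∀ j, ∃ K : MvPolynomial (Fin (s + 1)) R, K.IsHomogeneous m ∧ eval g K = b j ∧
        (¬ j < i → K = 0) := by
      intro j
      by_cases hj : j < i
      · have := hb j
        rw [hgen] at this
        obtain ⟨K, hK, hKe⟩ := (Ideal.mem_span_pow_iff_exists_isHomogeneous g _).1 this
        exact ⟨K, hK, hKe, fun h => absurd hj h⟩
      · exact ⟨0, isHomogeneous_zero _ _ _, by rw [hb0 j hj]; simp, fun _ => rfl⟩
    choose K hK hKe hK0 using hex
    have hG : (H i - ∑ j : Fin s, X j.castSucc * K j) ∈ presKerLe g (m + 1) := by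
      have hhom : (H i - ∑ j : Fin s, X j.castSucc * K j).IsHomogeneous (m + 1) :=
        (hH i).sub (homog_sum hK)
      refine Ideal.subset_span ⟨?_, m + 1, le_rfl, hhom⟩
      rw [mem_presKer_homog g hhom, map_sub, eval_snoc_sum, hbs]
      simp only [g] at hKe
      simp [hKe]
    let H' : Fin s → MvPolynomial (Fin (s + 1)) R := fun j =>
      if j = i then 0 else H j + X i.castSucc * K j
    have hsplit : ∑ j : Fin s, X j.castSucc * H j
        = X i.castSucc * (H i - ∑ j : Fin s, X j.castSucc * K j) + ∑ j : Fin s, X j.castSucc * H' j := by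
      rw [← Finset.add_sum_erase _ (fun j : Fin s => X j.castSucc * H j) (Finset.mem_univ i),
        ← Finset.add_sum_erase _ (fun j : Fin s => X j.castSucc * H' j) (Finset.mem_univ i),
        ← Finset.add_sum_erase _ (fun j : Fin s => X j.castSucc * K j) (Finset.mem_univ i),
        hK0 i (lt_irrefl _)]
      have : ∑ j ∈ Finset.univ.erase i, X j.castSucc * H' j
          = ∑ j ∈ Finset.univ.erase i, X j.castSucc * H j
            + X i.castSucc * ∑ j ∈ Finset.univ.erase i, X j.castSucc * K j := by
        rw [Finset.mul_sum, ← Finset.sum_add_distrib]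
        refine Finset.sum_congr rfl fun j hj => ?_
        simp only [H', if_neg (Finset.ne_of_mem_erase hj)]
        ring
      rw [this]
      simp only [H', if_true]
      ring
    have hXG := Ideal.mul_mem_left _ (X i.castSucc) hG
    rw [hsplit]
    refine Ideal.add_mem _ hXG (ih H' ?_ ?_ ?_)
    · intro j
      simp only [H']
      split_ifs
      · exact isHomogeneous_zero _ _ _
      · refine (hH j).add ?_
        exact (add_comm 1 m) ▸ (isHomogeneous_X R i.castSucc).mul (hK j)
    · intro j hj
      simp only [H']
      split_ifs with hji
      · rfl
      · have hne : j.val ≠ t := fun h => hji (Fin.ext h)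
        rw [h0 j (by omega), hK0 j (by rw [Fin.lt_def]; simp only [i]; omega)]
        simp
    · have := Ideal.sub_mem _ hQ (presKerLe_le g _ hXG)
      rwa [hsplit, add_sub_cancel_left] at this

/-- The evaluation point. -/
noncomputable abbrev evp (R : Type*) [CommRing R] (s : ℕ) : Fin (s + 1) → R :=
  Function.update (0 : Fin (s + 1) → R) (Fin.last s) 1

lemma lead_zero_mem {s : ℕ} (x : Fin s → R) (y : R) (I : Ideal R)
    (hgen : I = Ideal.span (Set.range (Fin.snoc x y : Fin (s + 1) → R)))
    (m : ℕ)
    (hT : ∀ i : Fin s,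
      (Ideal.span (x '' {j | j < i}) * I ^ (m + 1)).colon (Ideal.span {x i}) ⊓ I ^ (m + 1)
        = Ideal.span (x '' {j | j < i}) * I ^ m)
    {F : MvPolynomial (Fin (s + 1)) R} (hF : F.IsHomogeneous (m + 2))
    (hQ : F ∈ presKer (Fin.snoc x y : Fin (s + 1) → R)) (h0 : eval (evp R s) F = 0) :
    F ∈ presKerLe (Fin.snoc x y : Fin (s + 1) → R) (m + 1) := by
  obtain ⟨H, hH, he⟩ := form_decomp hF
  rw [h0, map_zero, zero_mul, zero_add] at he
  rw [he] at hQ ⊢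
  exact key_claim x y I hgen m hT s H hH (fun i hi => absurd i.2 (by omega)) hQ

lemma lead_mem {s : ℕ} (x : Fin s → R) (y : R) (I J : Ideal R)
    (hJ : J = Ideal.span (Set.range x))
    (hgen : I = Ideal.span (Set.range (Fin.snoc x y : Fin (s + 1) → R))) {n : ℕ}
    {F : MvPolynomial (Fin (s + 1)) R} (hF : F.IsHomogeneous (n + 1))
    (hQ : F ∈ presKer (Fin.snoc x y : Fin (s + 1) → R)) :
    eval (evp R s) F * y ^ (n + 1) ∈ J * I ^ n := by
  obtain ⟨H, hH, he⟩ := form_decomp hF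
  have hz := (mem_presKer_homog _ hF).1 hQ
  rw [he, map_add, eval_snoc_sum] at hz
  simp only [map_mul, map_pow, eval_C, eval_X, Fin.snoc_last] at hz
  rw [eq_neg_of_add_eq_zero_left hz]
  refine neg_mem (Ideal.sum_mem _ fun j _ => Ideal.mul_mem_mul ?_ ?_)
  · rw [hJ]
    exact Ideal.subset_span ⟨j, rfl⟩
  · rw [hgen]
    exact eval_mem_pow _ (hH j)

lemma exists_lead {s : ℕ} (x : Fin s → R) (y : R) (I J : Ideal R)
    (hJ : J = Ideal.span (Set.range x))
    (hgen : I = Ideal.span (Set.range (Fin.snoc x y : Fin (s + 1) → R))) {n : ℕ} {a : R}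
    (ha : a * y ^ (n + 1) ∈ J * I ^ n) :
    ∃ H : Fin s → MvPolynomial (Fin (s + 1)) R, (∀ i, (H i).IsHomogeneous n) ∧
      (C a * X (Fin.last s) ^ (n + 1) - ∑ i : Fin s, X i.castSucc * H i).IsHomogeneous (n + 1) ∧
      (C a * X (Fin.last s) ^ (n + 1) - ∑ i : Fin s, X i.castSucc * H i)
        ∈ presKer (Fin.snoc x y : Fin (s + 1) → R) ∧
      eval (evp R s) (C a * X (Fin.last s) ^ (n + 1) - ∑ i : Fin s, X i.castSucc * H i) = a := by
  rw [hJ, ← Set.image_univ] at ha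
  obtain ⟨b, hb, -, hs⟩ := exists_sum_of_mem_mul _ _ _ ha
  rw [hgen] at hb
  have := fun j => (Ideal.mem_span_pow_iff_exists_isHomogeneous
    (Fin.snoc x y : Fin (s + 1) → R) _).1 (hb j)
  choose H hH hHe using this
  have hhom : (C a * X (Fin.last s) ^ (n + 1) - ∑ i : Fin s, X i.castSucc * H i :
      MvPolynomial (Fin (s + 1)) R).IsHomogeneous (n + 1) :=
    (isHomogeneous_C_mul_X_pow _ _ _).sub (homog_sum hH)
  refine ⟨H, hH, hhom, ?_, ?_⟩
  · rw [mem_presKer_homog _ hhom, map_sub, eval_snoc_sum]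
    simp only [hHe, map_mul, map_pow, eval_C, eval_X, Fin.snoc_last, hs, sub_self]
  · have hc : ∀ i : Fin s, evp R s i.castSucc = 0 := fun i => by
      rw [evp, Function.update_of_ne (Fin.castSucc_lt_last i).ne]; rfl
    simp [map_sum, hc]

lemma y_mem {s : ℕ} (x : Fin s → R) (y : R) (I : Ideal R)
    (hgen : I = Ideal.span (Set.range (Fin.snoc x y : Fin (s + 1) → R))) : y ∈ I := by
  rw [hgen]
  exact Ideal.subset_span ⟨Fin.last s, by simp⟩

lemma colon_step (I J : Ideal R) {y : R} (hy : y ∈ I) {a : R} {k n : ℕ} (hkn : k ≤ n)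
    (h : a * y ^ (k + 1) ∈ J * I ^ k) : a * y ^ (n + 1) ∈ J * I ^ n := by
  obtain ⟨c, rfl⟩ := Nat.exists_eq_add_of_le hkn
  have : a * y ^ (k + c + 1) = (a * y ^ (k + 1)) * y ^ c := by ring
  rw [this, pow_add, ← mul_assoc]
  exact Ideal.mul_mem_mul h (Ideal.pow_mem_pow hy c)

lemma eval_presKerLe {s : ℕ} (x : Fin s → R) (y : R) (I J : Ideal R)
    (hJ : J = Ideal.span (Set.range x))
    (hgen : I = Ideal.span (Set.range (Fin.snoc x y : Fin (s + 1) → R))) {m : ℕ}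
    {F : MvPolynomial (Fin (s + 1)) R}
    (hF : F ∈ presKerLe (Fin.snoc x y : Fin (s + 1) → R) (m + 1)) :
    eval (evp R s) F * y ^ (m + 1) ∈ J * I ^ m := by
  have hle : presKerLe (Fin.snoc x y : Fin (s + 1) → R) (m + 1)
      ≤ ((J * I ^ m).colon (Ideal.span {y ^ (m + 1)})).comap (eval (evp R s)) := by
    refine Ideal.span_le.2 ?_
    rintro G ⟨hGQ, k, hk, hG⟩
    rw [SetLike.mem_coe, Ideal.mem_comap, Ideal.mem_colon_span_singleton]
    cases k with
    | zero =>
      have h1 := (mem_presKer_homog _ hG).1 hGQ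
      have h2 := totalDegree_eq_zero_iff_eq_C.1 ((totalDegree_zero_iff_isHomogeneous _).2 hG)
      rw [h2, eval_C] at h1
      rw [h2, h1]
      simp
    | succ k =>
      exact colon_step I J (y_mem x y I hgen) (by omega) (lead_mem x y I J hJ hgen hG hGQ)
  exact Ideal.mem_colon_span_singleton.1 (hle hF)

lemma pow_eq_of_mem {s : ℕ} (x : Fin s → R) (y : R) (I J : Ideal R)
    (hJ : J = Ideal.span (Set.range x))
    (hgen : I = Ideal.span (Set.range (Fin.snoc x y : Fin (s + 1) → R))) {n : ℕ}
    (h : y ^ (n + 1) ∈ J * I ^ n) : I ^ (n + 1) = J * I ^ n := by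
  have hJI : J ≤ I := by
    rw [hJ, hgen]
    refine Ideal.span_mono ?_
    rintro _ ⟨i, rfl⟩
    exact ⟨i.castSucc, by simp⟩
  apply le_antisymm
  · intro a ha
    rw [hgen] at ha
    obtain ⟨F, hF, rfl⟩ := (Ideal.mem_span_pow_iff_exists_isHomogeneous _ _).1 ha
    obtain ⟨H, hH, he⟩ := form_decomp hF
    rw [he, map_add, eval_snoc_sum]
    simp only [map_mul, map_pow, eval_C, eval_X, Fin.snoc_last]
    refine Ideal.add_mem _ (Ideal.mul_mem_left _ _ h)
      (Ideal.sum_mem _ fun j _ => Ideal.mul_mem_mul ?_ ?_)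
    · rw [hJ]
      exact Ideal.subset_span ⟨j, rfl⟩
    · rw [hgen]
      exact eval_mem_pow _ (hH j)
  · rw [pow_succ']
    exact Ideal.mul_mono_left hJI

end Helpers


/-- **Theorem A.**  Let `(R,m)` be a Noetherian local ring, `I` an ideal of `R` with minimal
generating set `x₁,…,xₛ,y`, where `J = (x₁,…,xₛ)` is a reduction of `I` with reduction number
`r`.  Assume condition `(𝒯ₙ)` for all `n ≥ 2`.  Then for each `n ≥ 2`, `F ↦ F(0,…,0,1)`
induces an isomorphism `(Q/Q⟨n-1⟩)ₙ ≅ (JIⁿ⁻¹ : yⁿ)/(JIⁿ⁻² : yⁿ⁻¹)`; in particular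
`rt(I) = r + 1` and `Q = (Y^(r+1) - ∑ Xᵢ Fᵢ) + Q⟨r⟩` for suitable forms `Fᵢ` of degree `r`. -/
theorem statement0 {R : Type*} [CommRing R] [IsNoetherianRing R] [IsLocalRing R]
    (I : Ideal R) {s : ℕ} (x : Fin s → R) (y : R) (r : ℕ)
    (J : Ideal R) (hJ : J = Ideal.span (Set.range x))
    (hgen : I = Ideal.span (Set.range (Fin.snoc x y)))
    (hmin : ∀ i : Fin (s + 1), I ≠ Ideal.span (Fin.snoc x y '' {j | j ≠ i}))
    (hred : IsLeast {k : ℕ | I ^ (k + 1) = J * I ^ k} r)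
    (hT : ∀ n, 2 ≤ n → ∀ i : Fin s,
      (Ideal.span (x '' {j | j < i}) * I ^ (n - 1)).colon (Ideal.span {x i}) ⊓ I ^ (n - 1)
        = Ideal.span (x '' {j | j < i}) * I ^ (n - 2)) :
    (∀ n, 2 ≤ n →
      ∃ e : presE (Fin.snoc x y) n ≃ₗ[R]
          (((J * I ^ (n - 1)).colon (Ideal.span {y ^ n})) ⧸
            Submodule.comap ((J * I ^ (n - 1)).colon (Ideal.span {y ^ n})).subtype
              ((J * I ^ (n - 2)).colon (Ideal.span {y ^ (n - 1)}))),
        ∀ (F : MvPolynomial (Fin (s + 1)) R) (hF : F ∈ presKerHomog (Fin.snoc x y) n),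
          ∃ h : MvPolynomial.eval (Function.update (0 : Fin (s + 1) → R) (Fin.last s) 1) F
              ∈ (J * I ^ (n - 1)).colon (Ideal.span {y ^ n}),
            e (Submodule.Quotient.mk ⟨F, hF⟩)
              = Submodule.Quotient.mk
                  ⟨MvPolynomial.eval (Function.update (0 : Fin (s + 1) → R) (Fin.last s) 1) F,
                    h⟩) ∧
    IsLeast {N : ℕ | 1 ≤ N ∧ presKer (Fin.snoc x y) = presKerLe (Fin.snoc x y) N} (r + 1) ∧
    ∃ F : Fin s → MvPolynomial (Fin (s + 1)) R, (∀ i, (F i).IsHomogeneous r) ∧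
      (X (Fin.last s) ^ (r + 1) - ∑ i, X i.castSucc * F i) ∈ presKer (Fin.snoc x y) ∧
      presKer (Fin.snoc x y)
        = Ideal.span {X (Fin.last s) ^ (r + 1) - ∑ i, X i.castSucc * F i}
            ⊔ presKerLe (Fin.snoc x y) r := by
  classical
  have hT' : ∀ m : ℕ, ∀ i : Fin s,
      (Ideal.span (x '' {j | j < i}) * I ^ (m + 1)).colon (Ideal.span {x i}) ⊓ I ^ (m + 1)
        = Ideal.span (x '' {j | j < i}) * I ^ m := fun m i => hT (m + 2) (by omega) i
  have hy := y_mem x y I hgen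
  -- r ≥ 1
  have hr : r ≠ 0 := by
    rintro rfl
    have h1 := hred.1
    simp only [Set.mem_ofPred_eq, zero_add, pow_one, pow_zero, mul_one, Ideal.one_eq_top,
      Ideal.mul_top] at h1
    apply hmin (Fin.last s)
    rw [h1, hJ]
    congr 1
    ext a
    constructor
    · rintro ⟨i, rfl⟩
      exact ⟨i.castSucc, (Fin.castSucc_lt_last i).ne, by simp⟩
    · rintro ⟨j, hj, rfl⟩
      revert hj
      refine Fin.lastCases (fun hj => absurd rfl hj) (fun i _ => ⟨i, by simp⟩) j
  obtain ⟨q, rfl⟩ := Nat.exists_eq_succ_of_ne_zero hr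
  have hyr : y ^ (q + 1 + 1) ∈ J * I ^ (q + 1) := by
    have h1 : I ^ (q + 1 + 1) = J * I ^ (q + 1) := hred.1
    rw [← h1]
    exact Ideal.pow_mem_pow hy _
  have hyq : y ^ (q + 1) ∉ J * I ^ q := by
    intro h
    have h1 := hred.2 (show q ∈ {k : ℕ | I ^ (k + 1) = J * I ^ k} from pow_eq_of_mem x y I J hJ hgen h)
    omega
  refine ⟨?_, ?_⟩
  · intro n hn
    obtain ⟨m, rfl⟩ := Nat.exists_eq_add_of_le' hn
    change ∃ e : presE (Fin.snoc x y) (m + 2) ≃ₗ[R]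
          (((J * I ^ (m + 1)).colon (Ideal.span {y ^ (m + 2)})) ⧸
            Submodule.comap ((J * I ^ (m + 1)).colon (Ideal.span {y ^ (m + 2)})).subtype
              ((J * I ^ m).colon (Ideal.span {y ^ (m + 1)}))),
        ∀ (F : MvPolynomial (Fin (s + 1)) R) (hF : F ∈ presKerHomog (Fin.snoc x y) (m + 2)),
          ∃ h : MvPolynomial.eval (Function.update (0 : Fin (s + 1) → R) (Fin.last s) 1) F
              ∈ (J * I ^ (m + 1)).colon (Ideal.span {y ^ (m + 2)}),
            e (Submodule.Quotient.mk ⟨F, hF⟩)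
              = Submodule.Quotient.mk
                  ⟨MvPolynomial.eval (Function.update (0 : Fin (s + 1) → R) (Fin.last s) 1) F, h⟩
    have hmem : ∀ F ∈ presKerHomog (Fin.snoc x y : Fin (s + 1) → R) (m + 2),
        eval (evp R s) F ∈ (J * I ^ (m + 1)).colon (Ideal.span {y ^ (m + 2)}) := by
      intro F hF
      rw [Ideal.mem_colon_span_singleton]
      exact lead_mem x y I J hJ hgen hF.1 hF.2
    let f : presKerHomog (Fin.snoc x y : Fin (s + 1) → R) (m + 2) →ₗ[R]
        ((J * I ^ (m + 1)).colon (Ideal.span {y ^ (m + 2)})) :=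
      { toFun := fun F => ⟨eval (evp R s) F.1, hmem F.1 F.2⟩
        map_add' := fun F G => Subtype.ext (by simp)
        map_smul' := fun c F => Subtype.ext (by simp [smul_eval]) }
    let N := Submodule.comap ((J * I ^ (m + 1)).colon (Ideal.span {y ^ (m + 2)})).subtype
              ((J * I ^ m).colon (Ideal.span {y ^ (m + 1)}))
    have hsurj : Function.Surjective (N.mkQ.comp f) := by
      refine (Submodule.mkQ_surjective N).comp ?_
      rintro ⟨a, ha⟩
      rw [Ideal.mem_colon_span_singleton] at ha
      obtain ⟨H, -, h1, h2, h3⟩ := exists_lead x y I J hJ hgen ha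
      exact ⟨⟨_, h1, h2⟩, Subtype.ext h3⟩
    have hker : Submodule.comap (presKerHomog (Fin.snoc x y : Fin (s + 1) → R) (m + 2)).subtype
        ((presKerLe (Fin.snoc x y : Fin (s + 1) → R) (m + 1)).restrictScalars R)
        = LinearMap.ker (N.mkQ.comp f) := by
      ext ⟨F, hF⟩
      rw [LinearMap.mem_ker, LinearMap.comp_apply, Submodule.mkQ_apply,
        Submodule.Quotient.mk_eq_zero]
      change F ∈ presKerLe (Fin.snoc x y : Fin (s + 1) → R) (m + 1) ↔
        eval (evp R s) F ∈ (J * I ^ m).colon (Ideal.span {y ^ (m + 1)})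
      rw [Ideal.mem_colon_span_singleton]
      constructor
      · exact fun h => eval_presKerLe x y I J hJ hgen h
      · intro h
        obtain ⟨H, -, h1, h2, h3⟩ := exists_lead x y I J hJ hgen h
        set G := C (eval (evp R s) F) * X (Fin.last s) ^ (m + 1) - ∑ i, X i.castSucc * H i
          with hG
        have hYG : X (Fin.last s) * G ∈ presKerLe (Fin.snoc x y : Fin (s + 1) → R) (m + 1) :=
          Ideal.mul_mem_left _ _ (Ideal.subset_span ⟨h2, m + 1, le_rfl, h1⟩)
        have hYGh : (X (Fin.last s) * G).IsHomogeneous (m + 2) := by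
          rw [show m + 2 = 1 + (m + 1) by omega]
          exact (isHomogeneous_X R _).mul h1
        have hF1 : F.IsHomogeneous (m + 2) := hF.1
        have := lead_zero_mem x y I hgen m (hT' m) (hF1.sub hYGh)
          (Ideal.sub_mem _ hF.2 (presKerLe_le _ _ hYG)) (by
            rw [map_sub, map_mul, h3]; simp)
        have h5 := Ideal.add_mem _ this hYG
        rwa [sub_add_cancel] at h5
    refine ⟨(Submodule.quotEquivOfEq _ _ hker).trans
      (LinearMap.quotKerEquivOfSurjective _ hsurj), fun F hF => ⟨hmem F hF, rfl⟩⟩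
  · obtain ⟨H, hH, h1, h2, h3⟩ := exists_lead x y I J hJ hgen (a := 1) (n := q + 1)
      (by rwa [one_mul])
    rw [map_one, one_mul] at h1 h2 h3
    set G := X (Fin.last s) ^ (q + 1 + 1) - ∑ i, X i.castSucc * H i with hG
    have hle : presKer (Fin.snoc x y : Fin (s + 1) → R)
        ≤ Ideal.span {G} ⊔ presKerLe (Fin.snoc x y : Fin (s + 1) → R) (q + 1) := by
      apply presKer_le_of_homog
      intro n
      induction n using Nat.strong_induction_on with
      | _ n ih =>
        intro F hF hFQ
        by_cases hn : n ≤ q + 1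
        · exact Ideal.mem_sup_right (Ideal.subset_span ⟨hFQ, n, hn, hF⟩)
        · obtain ⟨c, rfl⟩ := Nat.exists_eq_add_of_le (show q + 2 ≤ n by omega)
          set P := C (eval (evp R s) F) * X (Fin.last s) ^ c * G with hP
          have hPG : P ∈ Ideal.span {G} := Ideal.mul_mem_left _ _ (Ideal.subset_span rfl)
          have hPQ : P ∈ presKer (Fin.snoc x y : Fin (s + 1) → R) := Ideal.mul_mem_left _ _ h2
          have hPh : P.IsHomogeneous (q + 2 + c) := by
            rw [add_comm (q + 2) c]
            exact (isHomogeneous_C_mul_X_pow _ _ _).mul h1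
          have h4 := lead_zero_mem x y I hgen (q + c) (hT' _) (F := F - P)
            (by rw [show q + c + 2 = q + 2 + c by omega]; exact hF.sub hPh)
            (Ideal.sub_mem _ hFQ hPQ) (by simp [hP, h3])
          have h5 : presKerLe (Fin.snoc x y : Fin (s + 1) → R) (q + c + 1)
              ≤ Ideal.span {G} ⊔ presKerLe (Fin.snoc x y : Fin (s + 1) → R) (q + 1) := by
            refine Ideal.span_le.2 ?_
            rintro K ⟨hKQ, k, hk, hK⟩
            exact ih k (by omega) K hK hKQ
          have h6 := Ideal.add_mem _ (h5 h4) (Ideal.mem_sup_left hPG)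
          rwa [sub_add_cancel] at h6
    refine ⟨⟨⟨by omega, ?_⟩, ?_⟩, H, hH, h2, ?_⟩
    · refine le_antisymm (hle.trans (sup_le ?_ (presKerLe_mono _ (by omega)))) (presKerLe_le _ _)
      rw [Ideal.span_singleton_le_iff_mem]
      exact Ideal.subset_span ⟨h2, _, le_rfl, h1⟩
    · rintro N ⟨hN1, hN⟩
      by_contra hlt
      have h4 : G ∈ presKerLe (Fin.snoc x y : Fin (s + 1) → R) (q + 1) :=
        presKerLe_mono _ (by omega) (hN ▸ h2)
      have h5 := eval_presKerLe x y I J hJ hgen h4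
      rw [h3, one_mul] at h5
      exact hyq h5
    · refine le_antisymm hle (sup_le ?_ (presKerLe_le _ _))
      rw [Ideal.span_singleton_le_iff_mem]
      exact h2
end

section
/- Let (R,m) be a Noetherian local ring and I an ideal of R. Let x_1,…,x_s ∈ I be an R-regular sequence whose initial forms x_1*,…,x_{s-1}* in I/I^2 form a gr_I(R)-regular sequence. Then for all n ≥ 2 and all i = 1,…,s one has ((x_1,…,x_{i-1})I^{n-1} : x_i) ∩ I^{n-1} = (x_1,…,x_{i-1})I^{n-2}. -/
set_option synthInstance.maxHeartbeats 1000000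
set_option maxHeartbeats 1000000

section Defs

variable {R : Type*} [CommRing R]

/-- The ideal `I·R(I)` of the Rees algebra `R(I) = R[It] ⊆ R[t]`. -/
noncomputable def grIdeal (I : Ideal R) : Ideal (reesAlgebra I) :=
  Ideal.span ((algebraMap R (reesAlgebra I)) '' (I : Set R))

/-- The associated graded ring `gr_I(R) = ⊕ₙ Iⁿ/Iⁿ⁺¹`, realized as `R(I)/I·R(I)`. -/
abbrev GrRing (I : Ideal R) := reesAlgebra I ⧸ grIdeal I

end Defs

section Helpers

variable {R : Type*} [CommRing R]

lemma ofList_take_ofFn {A : Type*} [CommRing A] {s : ℕ} (x : Fin s → A) (k : ℕ) :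
    Ideal.ofList ((List.ofFn x).take k) = Ideal.span (x '' {j | j.val < k}) := by
  unfold Ideal.ofList
  congr 1
  ext r
  simp only [Set.mem_ofPred_eq, List.mem_take_iff_getElem, Set.mem_image, List.getElem_ofFn,
    List.length_ofFn]
  constructor
  · rintro ⟨j, hj, rfl⟩
    exact ⟨⟨j, by omega⟩, by simp; omega, rfl⟩
  · rintro ⟨j, hj, rfl⟩
    exact ⟨j.val, by have := j.2; omega, rfl⟩

lemma weak_use {A : Type*} [CommRing A] {rs : List A}
    (h : RingTheory.Sequence.IsWeaklyRegular A rs) (i : ℕ) (hi : i < rs.length) (a : A)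
    (ha : a * rs[i] ∈ Ideal.ofList (rs.take i)) : a ∈ Ideal.ofList (rs.take i) := by
  have h1 := h.regular_mod_prev i hi
  have e : (Ideal.ofList (rs.take i) • ⊤ : Submodule A A) = Ideal.ofList (rs.take i) := by
    simp
  have h2 : (Submodule.Quotient.mk a : A ⧸ (Ideal.ofList (rs.take i) • ⊤ : Submodule A A)) = 0 := by
    apply h1
    simp only [smul_zero]
    rw [← Submodule.Quotient.mk_smul, Submodule.Quotient.mk_eq_zero, e, smul_eq_mul, mul_comm]
    exact ha
  rwa [Submodule.Quotient.mk_eq_zero, e] at h2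

variable (I : Ideal R) {s : ℕ} (x : Fin s → R) (ξ : Fin s → reesAlgebra I)

lemma coeff_mem (hξ : ∀ i, (ξ i : Polynomial R) = Polynomial.C (x i) * Polynomial.X)
    (k : ℕ) (f : reesAlgebra I)
    (hf : f ∈ Ideal.span (ξ '' {j | j.val < k}) ⊔ grIdeal I) (p : ℕ) :
    (f : Polynomial R).coeff p ∈
      Ideal.span (x '' {j | j.val < k}) * I ^ (p - 1) ⊔ I ^ (p + 1) := by
  rw [grIdeal, ← Ideal.span_union] at hf
  induction hf using Submodule.span_induction generalizing p with
  | zero => simp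
  | add a b _ _ ha hb => simpa using Ideal.add_mem _ (ha p) (hb p)
  | mem f hf => 
    rcases hf with ⟨j, hj, rfl⟩ | ⟨u, hu, rfl⟩
    · rw [hξ]
      rcases p with _ | p
      · simp
      · rw [Polynomial.coeff_mul_X, Polynomial.coeff_C]
        split_ifs with h
        · subst h
          apply Ideal.mem_sup_left
          simpa using Ideal.subset_span (Set.mem_image_of_mem x hj)
        · simp
    · apply Ideal.mem_sup_right
      change (Polynomial.C u).coeff p ∈ _
      rw [Polynomial.coeff_C]
      split_ifs with h
      · subst h; simpa using hu
      · simp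
  | smul c f _ hf =>
    rw [smul_eq_mul, Subalgebra.coe_mul, Polynomial.coeff_mul]
    refine Ideal.sum_mem _ fun ij hij => ?_
    have hij' := Finset.HasAntidiagonal.mem_antidiagonal.mp hij
    have hm := Ideal.mul_mem_mul (c.2 ij.1) (hf ij.2)
    refine (?_ : I ^ ij.1 * _ ≤ _) hm
    rw [Ideal.mul_sup]
    refine sup_le_sup ?_ ?_
    · rw [mul_left_comm, ← pow_add]
      exact Ideal.mul_mono_right (Ideal.pow_le_pow_right (by omega))
    · rw [← pow_add]
      exact Ideal.pow_le_pow_right (by omega)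

lemma exists_rees (p : ℕ) (b : R) (hb : b ∈ I ^ p) :
    ∃ F : reesAlgebra I, (F : Polynomial R) = Polynomial.monomial p b :=
  ⟨⟨_, reesAlgebra.monomial_mem.mpr hb⟩, rfl⟩

lemma exists_mem (hξ : ∀ i, (ξ i : Polynomial R) = Polynomial.C (x i) * Polynomial.X)
    (k p : ℕ) (b : R) (hb : b ∈ Ideal.span (x '' {j | j.val < k}) * I ^ p ⊔ I ^ (p + 2)) :
    ∃ F ∈ Ideal.span (ξ '' {j | j.val < k}) ⊔ grIdeal I,
      (F : Polynomial R) = Polynomial.monomial (p + 1) b := by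
  have key : Ideal.span (x '' {j | j.val < k}) * I ^ p ⊔ I ^ (p + 2) ≤
      (Submodule.map (reesAlgebra I).val.toLinearMap
        ((Ideal.span (ξ '' {j | j.val < k}) ⊔ grIdeal I).restrictScalars R)).comap
        (Polynomial.monomial (p + 1) : R →ₗ[R] Polynomial R) := by
    refine sup_le ?_ ?_
    · rw [Ideal.mul_le]
      intro r hr t ht
      induction hr using Submodule.span_induction with
      | zero => simp
      | add a b _ _ ha hb => rw [add_mul]; exact Submodule.add_mem _ ha hb
      | smul c a _ ha => rw [smul_mul_assoc]; exact Submodule.smul_mem _ c ha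
      | mem a ha =>
        obtain ⟨j, hj, rfl⟩ := ha
        obtain ⟨F, hF⟩ := exists_rees I p t ht
        refine ⟨F * ξ j, Ideal.mul_mem_left _ _
          (Ideal.mem_sup_left (Ideal.subset_span (Set.mem_image_of_mem ξ hj))), ?_⟩
        change (F : Polynomial R) * (ξ j : Polynomial R) = _
        rw [hF, hξ, ← mul_assoc, Polynomial.monomial_mul_C, Polynomial.monomial_mul_X, mul_comm]
    · rw [show p + 2 = (p + 1) + 1 from rfl, pow_succ, Ideal.mul_le]
      intro t ht u hu
      obtain ⟨F, hF⟩ := exists_rees I (p + 1) t ht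
      refine ⟨F * algebraMap R (reesAlgebra I) u, Ideal.mul_mem_left _ _
        (Ideal.mem_sup_right (Ideal.subset_span (Set.mem_image_of_mem _ hu))), ?_⟩
      change (F : Polynomial R) * Polynomial.C u = _
      rw [hF, Polynomial.monomial_mul_C]
  obtain ⟨F, hF, e⟩ := key hb
  exact ⟨F, hF, e⟩

lemma gr_step (hξ : ∀ i, (ξ i : Polynomial R) = Polynomial.C (x i) * Polynomial.X)
    (hgr : RingTheory.Sequence.IsRegular (GrRing I)
      ((List.ofFn fun i => Ideal.Quotient.mk (grIdeal I) (ξ i)).take (s - 1)))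
    (k : Fin s) (hk : k.val < s - 1) (p : ℕ) (a : R) (ha : a ∈ I ^ p)
    (hax : a * x k ∈ Ideal.span (x '' {j | j.val < k.val}) * I ^ p ⊔ I ^ (p + 2)) :
    a ∈ Ideal.span (x '' {j | j.val < k.val}) * I ^ (p - 1) ⊔ I ^ (p + 1) := by
  obtain ⟨F, hF⟩ := exists_rees I p a ha
  obtain ⟨G, hG, hG'⟩ := exists_mem I x ξ hξ k p _ hax
  have hFG : F * ξ k = G := by
    apply Subtype.ext
    change (F : Polynomial R) * (ξ k : Polynomial R) = _
    rw [hF, hξ, hG', ← mul_assoc, Polynomial.monomial_mul_C, Polynomial.monomial_mul_X]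
  have e : Ideal.ofList ((((List.ofFn fun i => Ideal.Quotient.mk (grIdeal I) (ξ i)).take
      (s - 1))).take k.val) =
      (Ideal.span (ξ '' {j | j.val < k.val})).map (Ideal.Quotient.mk (grIdeal I)) := by
    rw [List.take_take, min_eq_left hk.le, Ideal.map_span, Set.image_image]
    exact ofList_take_ofFn (fun i => Ideal.Quotient.mk (grIdeal I) (ξ i)) k.val
  have hmem : ∀ H : reesAlgebra I, Ideal.Quotient.mk (grIdeal I) H ∈
      (Ideal.span (ξ '' {j | j.val < k.val})).map (Ideal.Quotient.mk (grIdeal I)) ↔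
      H ∈ Ideal.span (ξ '' {j | j.val < k.val}) ⊔ grIdeal I := by
    intro H
    rw [← Ideal.mem_comap, Ideal.comap_map_of_surjective' _ Ideal.Quotient.mk_surjective,
      Ideal.mk_ker]
  have h1 := weak_use hgr.toIsWeaklyRegular k.val (by simp; omega)
    (Ideal.Quotient.mk (grIdeal I) F) (by
      rw [e]
      simp only [List.getElem_take, List.getElem_ofFn]
      rw [← map_mul, hmem]
      simpa [hFG] using hG)
  rw [e, hmem] at h1
  have h2 := coeff_mem I x ξ hξ k F h1 p
  rw [hF] at h2
  simpa using h2

lemma span_succ (k : ℕ) (hk : k < s) :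
    Ideal.span (x '' {j | j.val < k + 1}) =
      Ideal.span (x '' {j | j.val < k}) ⊔ Ideal.span {x ⟨k, hk⟩} := by
  rw [← Ideal.span_union]
  congr 1
  ext r
  simp only [Set.mem_image, Set.mem_union, Set.mem_singleton_iff, Set.mem_ofPred_eq]
  constructor
  · rintro ⟨j, hj, rfl⟩
    rcases Nat.lt_succ_iff_lt_or_eq.mp hj with h | h
    · exact Or.inl ⟨j, h, rfl⟩
    · right; congr 1; exact Fin.ext h
  · rintro (⟨j, hj, rfl⟩ | rfl)
    · exact ⟨j, by omega, rfl⟩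
    · exact ⟨_, by simp, rfl⟩

lemma climb (hx : ∀ i, x i ∈ I)
    (hξ : ∀ i, (ξ i : Polynomial R) = Polynomial.C (x i) * Polynomial.X)
    (hgr : RingTheory.Sequence.IsRegular (GrRing I)
      ((List.ofFn fun i => Ideal.Quotient.mk (grIdeal I) (ξ i)).take (s - 1)))
    (k : ℕ) (hk : k ≤ s - 1) (p : ℕ) :
    Ideal.span (x '' {j | j.val < k}) * I ^ p ⊓ I ^ (p + 2) ≤
      Ideal.span (x '' {j | j.val < k}) * I ^ (p + 1) := by
  induction k with
  | zero => simp
  | succ k ih =>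
    have ih := ih (by omega)
    have hks : k < s := by omega
    rw [span_succ x k hks]
    rintro z ⟨hz, hz2⟩
    have hz : z ∈ _ := hz
    have hz2 : z ∈ I ^ (p + 2) := hz2
    rw [Ideal.sup_mul] at hz ⊢
    obtain ⟨w, hw, v, hv, rfl⟩ := Submodule.mem_sup.mp hz
    obtain ⟨a, ha, rfl⟩ := Ideal.mem_span_singleton_mul.mp hv
    have h1 := gr_step I x ξ hξ hgr ⟨k, hks⟩ (by simp; omega) p a ha (by
      have : a * x ⟨k, hks⟩ = -w + (w + x ⟨k, hks⟩ * a) := by ring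
      rw [this]
      exact Submodule.add_mem_sup (neg_mem hw) hz2)
    obtain ⟨b, hb, c, hc, rfl⟩ := Submodule.mem_sup.mp h1
    simp only at hb
    have hxc : x ⟨k, hks⟩ * c ∈ I ^ (p + 2) := by
      rw [show p + 2 = (p + 1) + 1 from rfl, pow_succ']
      exact Ideal.mul_mem_mul (hx _) hc
    have hxb : x ⟨k, hks⟩ * b ∈ Ideal.span (x '' {j | j.val < k}) * I ^ p := by
      rcases p with _ | p
      · exact Ideal.mul_mem_left _ _ hb
      · rw [pow_succ', mul_left_comm]
        exact Ideal.mul_mem_mul (hx _) hb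
    have e : w + x ⟨k, hks⟩ * (b + c) = (w + x ⟨k, hks⟩ * b) + x ⟨k, hks⟩ * c := by ring
    rw [e] at hz2 ⊢
    refine Submodule.add_mem_sup (ih ⟨Ideal.add_mem _ hw hxb, ?_⟩)
      (Ideal.mem_span_singleton_mul.mpr ⟨c, hc, rfl⟩)
    exact (Ideal.add_mem_iff_left _ hxc).mp hz2

lemma vv (hx : ∀ i, x i ∈ I)
    (hξ : ∀ i, (ξ i : Polynomial R) = Polynomial.C (x i) * Polynomial.X)
    (hgr : RingTheory.Sequence.IsRegular (GrRing I)
      ((List.ofFn fun i => Ideal.Quotient.mk (grIdeal I) (ξ i)).take (s - 1)))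
    (k : ℕ) (hk : k ≤ s - 1) (p : ℕ) :
    Ideal.span (x '' {j | j.val < k}) ⊓ I ^ (p + 1) ≤
      Ideal.span (x '' {j | j.val < k}) * I ^ p := by
  induction p with
  | zero => simp
  | succ p ih =>
    intro z hz
    exact climb I x ξ hx hξ hgr k hk p
      ⟨ih ⟨hz.1, Ideal.pow_le_pow_right (by omega) hz.2⟩, hz.2⟩

end Helpers

/-- If `x₁,…,xₛ ∈ I` is an `R`-regular sequence whose initial forms
`x₁*,…,x_{s-1}*` (the classes of `xᵢt` in `gr_I(R) = R(I)/I·R(I)`) form a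
`gr_I(R)`-regular sequence, then the conditions `(𝒯ₙ)` hold for all `n ≥ 2`. -/
theorem statement1 {R : Type*} [CommRing R] [IsNoetherianRing R] [IsLocalRing R]
    (I : Ideal R) {s : ℕ} (x : Fin s → R) (hx : ∀ i, x i ∈ I)
    (hreg : RingTheory.Sequence.IsRegular R (List.ofFn x))
    (ξ : Fin s → reesAlgebra I)
    (hξ : ∀ i, (ξ i : Polynomial R) = Polynomial.C (x i) * Polynomial.X)
    (hgrreg : RingTheory.Sequence.IsRegular (GrRing I)
      ((List.ofFn fun i => Ideal.Quotient.mk (grIdeal I) (ξ i)).take (s - 1))) :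
    ∀ n, 2 ≤ n → ∀ i : Fin s,
      (Ideal.span (x '' {j | j < i}) * I ^ (n - 1)).colon (Ideal.span {x i}) ⊓ I ^ (n - 1)
        = Ideal.span (x '' {j | j < i}) * I ^ (n - 2) := by
  intro n hn i
  obtain ⟨m, rfl⟩ : ∃ m, n = m + 2 := ⟨n - 2, by omega⟩
  simp only [show m + 2 - 1 = m + 1 by omega, show m + 2 - 2 = m by omega]
  have hset : {j : Fin s | j < i} = {j : Fin s | j.val < i.val} := rfl
  rw [hset]
  apply le_antisymm
  · rintro a ⟨ha, ha2⟩
    refine vv I x ξ hx hξ hgrreg i.val (by omega) m ⟨?_, ha2⟩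
    have ha' : a * x i ∈ Ideal.span (x '' {j | j.val < i.val}) * I ^ (m + 1) :=
      Submodule.mem_colon.mp ha _ (Ideal.mem_span_singleton_self _)
    have := weak_use hreg.toIsWeaklyRegular i.val (by simp) a (by
      rw [ofList_take_ofFn]
      simpa using Ideal.mul_le_left ha')
    rwa [ofList_take_ofFn] at this
  · have hJ : Ideal.span (x '' {j | j.val < i.val}) ≤ I := by
      rw [Ideal.span_le]
      rintro _ ⟨j, _, rfl⟩
      exact hx j
    refine le_inf ?_ ?_
    · intro a ha
      refine Submodule.mem_colon.mpr fun y hy => ?_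
      have hy' : y ∈ I := (Ideal.span_singleton_le_iff_mem I).mpr (hx i) hy
      rw [smul_eq_mul, pow_succ, ← mul_assoc]
      exact Ideal.mul_mem_mul ha hy'
    · rw [pow_succ']
      exact Ideal.mul_mono_left hJ
end

section
/- Let (R,m) be a Noetherian local ring, I an ideal of R, x_1,…,x_s a sequence of elements of I and n ≥ 2 an integer. Then the following two conditions are equivalent: (ii) in the Rees algebra R[It] ⊆ R[t], for all i = 1,…,s one has I^{n-1}t^{n-1} ∩ ((x_1t,…,x_{i-1}t) : x_i t) = I^{n-1}t^{n-1} ∩ (x_1t,…,x_{i-1}t); (iii) for all i = 1,…,s one has ((x_1,…,x_{i-1})I^{n-1} : x_i) ∩ I^{n-1} = (x_1,…,x_{i-1})I^{n-2}. -/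
open Polynomial in
theorem aux_coeff {R : Type*} [CommRing R] (I : Ideal R) {s : ℕ} (x : Fin s → R)
    (ξ : Fin s → reesAlgebra I)
    (hξ : ∀ i, (ξ i : Polynomial R) = Polynomial.C (x i) * Polynomial.X)
    (S : Set (Fin s)) (v : reesAlgebra I) (hv : v ∈ Ideal.span (ξ '' S)) (k : ℕ) :
    (v : R[X]).coeff (k+1) ∈ Ideal.span (x '' S) * I ^ k := by
  obtain ⟨m, f, g, rfl⟩ := Submodule.mem_span_set'.1 hv
  rw [AddSubmonoidClass.coe_finsetSum, finsetSum_coeff]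
  refine Submodule.sum_mem _ fun l _ => ?_
  obtain ⟨j, hj, hg⟩ := (g l).2
  rw [← hg, smul_eq_mul, Subalgebra.coe_mul, hξ,
    show (f l : R[X]) * (C (x j) * X) = C (x j) * ((f l : R[X]) * X) by ring,
    coeff_C_mul, coeff_mul_X]
  exact Ideal.mul_mem_mul (Ideal.subset_span ⟨j, hj, rfl⟩) ((f l).2 k)

open Polynomial in
theorem aux_lift {R : Type*} [CommRing R] (I : Ideal R) {s : ℕ} (x : Fin s → R)
    (ξ : Fin s → reesAlgebra I)
    (hξ : ∀ i, (ξ i : Polynomial R) = Polynomial.C (x i) * Polynomial.X)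
    (S : Set (Fin s)) (k : ℕ) (a : R) (ha : a ∈ Ideal.span (x '' S) * I ^ k) :
    ∃ v ∈ Ideal.span (ξ '' S), (v : R[X]) = C a * X ^ (k+1) := by
  induction ha using Submodule.mul_induction_on' with
  | mem_mul_mem m hm b hb =>
    induction hm using Submodule.span_induction with
    | mem y hy =>
      obtain ⟨j, hj, rfl⟩ := hy
      refine ⟨⟨monomial k b, reesAlgebra.monomial_mem.2 hb⟩ * ξ j,
        Ideal.mul_mem_left _ _ (Ideal.subset_span ⟨j, hj, rfl⟩), ?_⟩
      rw [Subalgebra.coe_mul, hξ]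
      change monomial k b * (C (x j) * X) = _
      rw [← C_mul_X_pow_eq_monomial, C_mul]
      ring
    | zero => exact ⟨0, zero_mem _, by simp⟩
    | add y z _ _ h1 h2 =>
      obtain ⟨v, hv, e⟩ := h1
      obtain ⟨w, hw, e'⟩ := h2
      refine ⟨v + w, add_mem hv hw, ?_⟩
      rw [Subalgebra.coe_add, e, e']
      simp only [C_mul, C_add]; ring
    | smul r y _ h =>
      obtain ⟨v, hv, e⟩ := h
      refine ⟨algebraMap R _ r * v, Ideal.mul_mem_left _ _ hv, ?_⟩
      rw [Subalgebra.coe_mul, e]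
      simp only [C_mul, smul_eq_mul, Subalgebra.coe_algebraMap, algebraMap_eq]; ring
  | add y _ z _ h1 h2 =>
    obtain ⟨v, hv, e⟩ := h1
    obtain ⟨w, hw, e'⟩ := h2
    refine ⟨v + w, add_mem hv hw, ?_⟩
    rw [Subalgebra.coe_add, e, e']
    simp only [C_add]; ring

open Polynomial in
theorem aux_iff {R : Type*} [CommRing R] (I : Ideal R) {s : ℕ} (x : Fin s → R)
    (ξ : Fin s → reesAlgebra I)
    (hξ : ∀ i, (ξ i : Polynomial R) = Polynomial.C (x i) * Polynomial.X)
    (S : Set (Fin s)) (k : ℕ) (a : R) (v : reesAlgebra I) (e : (v : R[X]) = C a * X ^ (k+1)) :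
    v ∈ Ideal.span (ξ '' S) ↔ a ∈ Ideal.span (x '' S) * I ^ k := by
  constructor
  · intro h
    have := aux_coeff I x ξ hξ S v h k
    rwa [e, coeff_C_mul_X_pow, if_pos rfl] at this
  · intro h
    obtain ⟨w, hw, e'⟩ := aux_lift I x ξ hξ S k a h
    rwa [show v = w from Subtype.ext (e.trans e'.symm)]

theorem aux_colon {A : Type*} [CommRing A] (J : Ideal A) (b u : A) :
    u ∈ J.colon (Ideal.span {b} : Ideal A) ↔ u * b ∈ J := by
  rw [Submodule.mem_colon]
  constructor
  · intro h
    exact h b (Ideal.mem_span_singleton_self b)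
  · intro h p hp
    obtain ⟨c, rfl⟩ := Ideal.mem_span_singleton'.1 hp
    have := J.mul_mem_left c h
    rw [smul_eq_mul]
    convert this using 1
    ring

/-- Equivalence of the vanishing conditions in the Rees algebra `R[It]` and the
corresponding colon-ideal conditions in `R`:  for all `i = 1,…,s`,
`Iⁿ⁻¹tⁿ⁻¹ ∩ ((x₁t,…,x_{i-1}t) : xᵢt) = Iⁿ⁻¹tⁿ⁻¹ ∩ (x₁t,…,x_{i-1}t)`
iff for all `i = 1,…,s`,
`((x₁,…,x_{i-1})Iⁿ⁻¹ : xᵢ) ∩ Iⁿ⁻¹ = (x₁,…,x_{i-1})Iⁿ⁻²`. -/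
theorem statement2 {R : Type*} [CommRing R] [IsNoetherianRing R] [IsLocalRing R]
    (I : Ideal R) {s : ℕ} (x : Fin s → R) (hx : ∀ i, x i ∈ I)
    (n : ℕ) (hn : 2 ≤ n)
    (ξ : Fin s → reesAlgebra I)
    (hξ : ∀ i, (ξ i : Polynomial R) = Polynomial.C (x i) * Polynomial.X) :
    (∀ i : Fin s,
        {u : reesAlgebra I | ∃ a ∈ I ^ (n - 1),
            (u : Polynomial R) = Polynomial.C a * Polynomial.X ^ (n - 1)} ∩
          ((Ideal.span (ξ '' {j | j < i})).colon (Ideal.span {ξ i}) : Set (reesAlgebra I))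
        = {u : reesAlgebra I | ∃ a ∈ I ^ (n - 1),
            (u : Polynomial R) = Polynomial.C a * Polynomial.X ^ (n - 1)} ∩
          (Ideal.span (ξ '' {j | j < i}) : Set (reesAlgebra I))) ↔
    (∀ i : Fin s,
        (Ideal.span (x '' {j | j < i}) * I ^ (n - 1)).colon (Ideal.span {x i}) ⊓ I ^ (n - 1)
          = Ideal.span (x '' {j | j < i}) * I ^ (n - 2)) := by
  obtain ⟨k, rfl⟩ := Nat.exists_eq_add_of_le' hn
  refine forall_congr' fun i => ?_
  simp only [show k + 2 - 1 = k + 1 from rfl, show k + 2 - 2 = k from rfl]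
  have key : ∀ (u : reesAlgebra I) (a : R),
      (u : Polynomial R) = Polynomial.C a * Polynomial.X ^ (k + 1) →
      (u ∈ (Ideal.span (ξ '' {j | j < i})).colon (Ideal.span {ξ i} : Ideal (reesAlgebra I)) ↔
        a ∈ (Ideal.span (x '' {j | j < i}) * I ^ (k + 1)).colon (Ideal.span {x i} : Ideal R)) := by
    intro u a e
    rw [aux_colon, aux_colon]
    apply aux_iff I x ξ hξ
    rw [Subalgebra.coe_mul, e, hξ, Polynomial.C_mul]
    ring
  have hle : Ideal.span (x '' {j | j < i}) * I ^ k ≤ I ^ (k + 1) := by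
    rw [pow_succ']
    refine Ideal.mul_mono_left (Ideal.span_le.2 ?_)
    rintro _ ⟨j, _, rfl⟩
    exact hx j
  constructor
  · intro h
    ext a
    rw [Submodule.mem_inf]
    have main : a ∈ I ^ (k + 1) →
        (a ∈ (Ideal.span (x '' {j | j < i}) * I ^ (k + 1)).colon (Ideal.span {x i} : Ideal R) ↔
          a ∈ Ideal.span (x '' {j | j < i}) * I ^ k) := by
      intro ha
      let u : reesAlgebra I := ⟨Polynomial.monomial (k + 1) a, reesAlgebra.monomial_mem.2 ha⟩
      have e : (u : Polynomial R) = Polynomial.C a * Polynomial.X ^ (k + 1) :=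
        (Polynomial.C_mul_X_pow_eq_monomial).symm
      rw [← key u a e, ← aux_iff I x ξ hξ _ k a u e]
      have h2 := Set.ext_iff.1 h u
      have h3 : u ∈ {u : reesAlgebra I | ∃ a ∈ I ^ (k + 1),
            (u : Polynomial R) = Polynomial.C a * Polynomial.X ^ (k + 1)} := ⟨a, ha, e⟩
      rw [Set.mem_inter_iff, Set.mem_inter_iff, and_congr_right_iff] at h2
      exact h2 h3
    exact ⟨fun h => (main h.2).1 h.1, fun h => ⟨(main (hle h)).2 h, hle h⟩⟩
  · intro h
    ext u
    rw [Set.mem_inter_iff, Set.mem_inter_iff, and_congr_right_iff]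
    rintro ⟨a, ha, e⟩
    rw [SetLike.mem_coe, SetLike.mem_coe, key u a e, aux_iff I x ξ hξ _ k a u e, ← h,
      Submodule.mem_inf]
    exact ⟨fun h => ⟨h, ha⟩, fun h => h.1⟩
end

section
/- Let (R,m) be a Cohen–Macaulay local ring of dimension d and let I be an m-primary ideal of R. Let x_1,…,x_d,y be a minimal generating set of I, with J=(x_1,…,x_d) a reduction of I with reduction number r = r_J(I). Suppose that the initial forms x_1*,…,x_{d-1}* form a gr_I(R)-regular sequence. Then there is a form Y^{r+1} − Σ_i X_i F_i ∈ Q_{r+1}, induced by y^{r+1} ∈ JI^r, with F_i homogeneous of degree r, such that Q = (Y^{r+1} − Σ_i X_i F_i) + Q⟨r⟩; in particular rt(I) = r + 1. -/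
set_option synthInstance.maxHeartbeats 1000000
set_option maxHeartbeats 1000000

open MvPolynomial

section Aux
variable {R : Type*} [CommRing R]

lemma aux_krull [IsNoetherianRing R] [IsLocalRing R] (I K : Ideal R) (hI : I ≠ ⊤) (g : R)
    (h : ∀ n : ℕ, g ∈ K ⊔ I ^ n) : g ∈ K := by
  have := Ideal.iInf_pow_smul_eq_bot_of_isLocalRing (M := R ⧸ K) I hI
  rw [← Ideal.Quotient.eq_zero_iff_mem]
  have h2 : Ideal.Quotient.mk K g ∈ (⨅ i : ℕ, I ^ i • ⊤ : Submodule R (R ⧸ K)) := by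
    rw [Submodule.mem_iInf]
    intro n
    obtain ⟨a, ha, b, hb, rfl⟩ := Submodule.mem_sup.1 (h n)
    rw [map_add, Ideal.Quotient.eq_zero_iff_mem.2 ha, zero_add]
    have : Ideal.Quotient.mk K b = b • (1 : R ⧸ K) := by
      rw [Algebra.smul_def, mul_one]; rfl
    rw [this]
    exact Submodule.smul_mem_smul hb trivial
  rw [this] at h2
  simpa using h2

lemma aux_VV [IsNoetherianRing R] [IsLocalRing R] (I : Ideal R) (hI : I ≠ ⊤) (x : ℕ → R)
    (Jk : ℕ → Ideal R) (h0 : Jk 0 = ⊥) (hs : ∀ k, Jk (k + 1) = Jk k ⊔ Ideal.span {x k})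
    (hx : ∀ k, x k ∈ I) (K : ℕ)
    (T : ∀ k < K, ∀ n, ∀ g ∈ I ^ n, x k * g ∈ Jk k * I ^ n ⊔ I ^ (n + 2) →
      g ∈ Jk k ⊔ I ^ (n + 1)) : ∀ k ≤ K,
      (∀ n a, a ∈ Jk k → a ∈ I ^ (n + 1) → a ∈ Jk k * I ^ n) ∧
      (∀ j < k, ∀ g, x j * g ∈ Jk j → g ∈ Jk j) := by
  intro k
  induction k with
  | zero =>
    intro _
    refine ⟨fun n a ha _ => ?_, fun j hj => by omega⟩
    rw [h0] at ha ⊢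
    rw [Ideal.mem_bot] at ha
    simp [ha]
  | succ k ih =>
    intro hk
    obtain ⟨ih1, ih2⟩ := ih (by omega)
    have xI : ∀ n b, b ∈ I ^ n → x k * b ∈ I ^ (n + 1) := fun n b hb => by
      rw [pow_succ']; exact Ideal.mul_mem_mul (hx k) hb
    constructor
    · intro n a ha han
      have key : ∀ m ≤ n, ∃ j ∈ Jk k, ∃ b ∈ I ^ m, a = j + x k * b := by
        intro m
        induction m with
        | zero =>
          intro _
          rw [hs] at ha
          obtain ⟨j, hj, c, hc, rfl⟩ := Submodule.mem_sup.1 ha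
          obtain ⟨b, rfl⟩ := Ideal.mem_span_singleton'.1 hc
          exact ⟨j, hj, b, by simp, by ring⟩
        | succ m ihm =>
          intro hm
          obtain ⟨j, hj, b, hb, e⟩ := ihm (by omega)
          have hjI : j ∈ I ^ (m + 1) := by
            have : j = a - x k * b := by rw [e]; ring
            rw [this]
            exact sub_mem (Ideal.pow_le_pow_right (by omega) han) (xI _ _ hb)
          have h1 : x k * b ∈ Jk k * I ^ m ⊔ I ^ (m + 2) := by
            have : x k * b = -j + a := by rw [e]; ring
            rw [this]
            exact Submodule.add_mem_sup (neg_mem (ih1 _ _ hj hjI))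
              (Ideal.pow_le_pow_right (by omega) han)
          obtain ⟨j', hj', b', hb', e'⟩ := Submodule.mem_sup.1 (T k (by omega) m b hb h1)
          exact ⟨j + x k * j', add_mem hj (Ideal.mul_mem_left _ _ hj'), b', hb', by
            rw [e, ← e']; ring⟩
      obtain ⟨j, hj, b, hb, e⟩ := key n le_rfl
      have hjI : j ∈ I ^ (n + 1) := by
        have : j = a - x k * b := by rw [e]; ring
        rw [this]
        exact sub_mem han (xI _ _ hb)
      rw [e, hs, Ideal.sup_mul]
      exact Submodule.add_mem_sup (ih1 _ _ hj hjI)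
        (Ideal.mul_mem_mul (Ideal.mem_span_singleton_self _) hb)
    · intro j hj g hg
      rcases Nat.lt_succ_iff_lt_or_eq.1 hj with hj | rfl
      · exact ih2 j hj g hg
      · apply aux_krull I _ hI
        intro n
        induction n with
        | zero => simp
        | succ n ihn =>
          obtain ⟨u, hu, v, hv, e⟩ := Submodule.mem_sup.1 ihn
          have h1 : x j * v ∈ Jk j := by
            have : x j * v = x j * g - x j * u := by rw [← e]; ring
            rw [this]
            exact sub_mem hg (Ideal.mul_mem_left _ _ hu)
          have h2 := T j (by omega) n v hv (Submodule.mem_sup_left (ih1 _ _ h1 (xI _ _ hv)))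
          rw [← e]
          exact add_mem (Submodule.mem_sup_left hu) h2

lemma aux_memJk (x : ℕ → R)
    (Jk : ℕ → Ideal R) (h0 : Jk 0 = ⊥) (hs : ∀ k, Jk (k + 1) = Jk k ⊔ Ideal.span {x k})
    (L : Ideal R) (k : ℕ) : ∀ a ∈ Jk k * L,
    ∃ h : ℕ → R, (∀ i, h i ∈ L) ∧ a = ∑ i ∈ Finset.range k, x i * h i := by
  induction k with
  | zero =>
    intro a ha
    refine ⟨fun _ => 0, by simp, ?_⟩
    simpa [h0] using ha
  | succ k ih =>
    intro a ha
    rw [hs, Ideal.sup_mul] at ha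
    obtain ⟨j, hj, c, hc, rfl⟩ := Submodule.mem_sup.1 ha
    obtain ⟨b, hb, rfl⟩ := Ideal.mem_span_singleton_mul.1 hc
    obtain ⟨h, hh, rfl⟩ := ih j hj
    refine ⟨fun i => if i = k then b else h i, fun i => ?_, ?_⟩
    · dsimp only; split_ifs; exacts [hb, hh i]
    · rw [Finset.sum_range_succ]
      dsimp only
      rw [if_pos rfl]
      congr 1
      refine Finset.sum_congr rfl fun i hi => ?_
      rw [if_neg (Finset.mem_range.1 hi).ne]

lemma aux_sumJk (x : ℕ → R)
    (Jk : ℕ → Ideal R) (hs : ∀ k, Jk (k + 1) = Jk k ⊔ Ideal.span {x k}) (k : ℕ)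
    (h : ℕ → R) : ∑ i ∈ Finset.range k, x i * h i ∈ Jk k := by
  induction k with
  | zero => simp
  | succ k ih =>
    rw [Finset.sum_range_succ, hs]
    exact Submodule.add_mem_sup ih (Ideal.mul_mem_right _ _ (Ideal.mem_span_singleton_self _))

lemma aux_rees {m : ℕ} (g : Fin m → R) (n : ℕ) (F : MvPolynomial (Fin m) R)
    (hF : F.IsHomogeneous n) : reesPres g F = Polynomial.monomial n (eval g F) := by
  classical
  rw [reesPres, aeval_def, eval₂_eq, eval_eq, map_sum]
  refine Finset.sum_congr rfl fun s hs => ?_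
  have h1 : ∑ i, s i = n := by
    have := hF (mem_support_iff.1 hs)
    rw [← this, Finsupp.weight_apply, Finsupp.sum_fintype] <;> simp
  have h2 : ∏ i ∈ s.support, (Polynomial.C (g i) * Polynomial.X) ^ s i =
      Polynomial.C (∏ i ∈ s.support, g i ^ s i) * Polynomial.X ^ n := by
    simp_rw [mul_pow]
    rw [Finset.prod_mul_distrib, map_prod, Finset.prod_pow_eq_pow_sum]
    congr 2
    · simp
    · rw [← h1]
      exact Finset.sum_subset (Finset.subset_univ _) (by simp)
  rw [h2, ← Polynomial.C_mul_X_pow_eq_monomial, map_mul, mul_assoc]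
  rfl

lemma aux_memQ {m : ℕ} (g : Fin m → R) (n : ℕ) (F : MvPolynomial (Fin m) R)
    (hF : F.IsHomogeneous n) : F ∈ presKer g ↔ eval g F = 0 := by
  rw [presKer, RingHom.mem_ker]
  erw [aux_rees g n F hF]
  simp

lemma aux_compQ {m : ℕ} (g : Fin m → R) (F : MvPolynomial (Fin m) R)
    (hF : F ∈ presKer g) (n : ℕ) : homogeneousComponent n F ∈ presKer g := by
  rw [aux_memQ g n _ (homogeneousComponent_isHomogeneous n F)]
  have h : reesPres g F = 0 := hF
  rw [← sum_homogeneousComponent F, map_sum,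
    Finset.sum_congr rfl fun i _ => aux_rees g i _ (homogeneousComponent_isHomogeneous i F)] at h
  by_cases hn : n ≤ F.totalDegree
  · have := congrArg (fun p => Polynomial.coeff p n) h
    simp only [Polynomial.finsetSum_coeff, Polynomial.coeff_monomial, Polynomial.coeff_zero] at this
    rw [Finset.sum_ite_eq' , if_pos (Finset.mem_range.2 (by omega))] at this
    exact this
  · rw [homogeneousComponent_eq_zero _ _ (by omega)]; simp

lemma aux_syz {m : ℕ} (g : Fin m → R) (I : Ideal R) (hI : I = Ideal.span (Set.range g))
    (x : ℕ → R) (Jk : ℕ → Ideal R) (hs : ∀ k, Jk (k + 1) = Jk k ⊔ Ideal.span {x k})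
    (z : ℕ → MvPolynomial (Fin m) R) (hz : ∀ i, (z i).IsHomogeneous 1)
    (hzx : ∀ i, eval g (z i) = x i) (d n : ℕ)
    (A : ∀ k < d, ∀ a ∈ I ^ (n + 1), x k * a ∈ Jk k →
      ∃ h : ℕ → R, (∀ i, h i ∈ I ^ n) ∧ a = ∑ i ∈ Finset.range k, x i * h i)
    (k : ℕ) (hk : k ≤ d) : ∀ G : ℕ → MvPolynomial (Fin m) R, (∀ i, (G i).IsHomogeneous (n + 1)) →
      eval g (∑ i ∈ Finset.range k, z i * G i) = 0 →
      ∑ i ∈ Finset.range k, z i * G i ∈ presKerLe g (n + 1) := by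
  induction k with
  | zero => simp
  | succ k ih =>
    intro G hG h
    have hmem : eval g (G k) ∈ I ^ (n + 1) := by
      rw [hI, Ideal.mem_span_pow_iff_exists_isHomogeneous]
      exact ⟨G k, hG k, rfl⟩
    have h1 : x k * eval g (G k) ∈ Jk k := by
      rw [Finset.sum_range_succ, map_add, map_mul, hzx, add_comm, add_eq_zero_iff_eq_neg] at h
      rw [h]
      refine neg_mem ?_
      rw [map_sum]
      simp_rw [map_mul, hzx]
      exact aux_sumJk x Jk hs k _
    obtain ⟨a, ha, e⟩ := A k (by omega) _ hmem h1
    have : ∀ i, ∃ H : MvPolynomial (Fin m) R, H.IsHomogeneous n ∧ eval g H = a i := fun i => by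
      have := ha i
      rwa [hI, Ideal.mem_span_pow_iff_exists_isHomogeneous] at this
    choose H hH hHa using this
    have e2 : ∑ i ∈ Finset.range (k + 1), z i * G i =
        ∑ i ∈ Finset.range k, z i * (G i + z k * H i) +
          z k * (G k - ∑ i ∈ Finset.range k, z i * H i) := by
      rw [Finset.sum_range_succ, mul_sub, Finset.mul_sum]
      simp_rw [mul_add]
      rw [Finset.sum_add_distrib]
      have : ∑ i ∈ Finset.range k, z i * (z k * H i) = ∑ i ∈ Finset.range k, z k * (z i * H i) :=
        Finset.sum_congr rfl fun i _ => by ring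
      rw [this]; ring
    have h3 : eval g (G k - ∑ i ∈ Finset.range k, z i * H i) = 0 := by
      rw [map_sub, map_sum, e]
      simp_rw [map_mul, hzx, hHa, sub_self]
    have hh : ∀ i j, (z i * H j).IsHomogeneous (n + 1) := fun i j => by
      rw [add_comm]; exact (hz i).mul (hH j)
    have h4 : (G k - ∑ i ∈ Finset.range k, z i * H i).IsHomogeneous (n + 1) :=
      (hG k).sub (IsHomogeneous.sum _ _ _ fun i _ => hh i i)
    rw [e2] at h ⊢
    refine add_mem (ih (by omega) _ (fun i => (hG i).add (hh k i)) ?_) ?_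
    · rw [map_add, map_mul, h3, mul_zero, add_zero] at h
      exact h
    · refine Ideal.mul_mem_left _ _ (Ideal.subset_span ⟨?_, n + 1, le_rfl, h4⟩)
      rw [aux_memQ g _ _ h4, h3]

lemma aux_decomp {d : ℕ} (z : ℕ → MvPolynomial (Fin (d + 1)) R)
    (hz : ∀ i : Fin d, z i = X i.castSucc) (n : ℕ) (F : MvPolynomial (Fin (d + 1)) R)
    (hF : F.IsHomogeneous (n + 1)) : ∃ (c : R) (G : ℕ → MvPolynomial (Fin (d + 1)) R),
      (∀ i, (G i).IsHomogeneous n) ∧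
      F = C c * X (Fin.last d) ^ (n + 1) + ∑ i ∈ Finset.range d, z i * G i := by
  classical
  rw [F.as_sum]
  have : ∀ s ⊆ F.support, ∃ (c : R) (G : ℕ → MvPolynomial (Fin (d + 1)) R),
      (∀ i, (G i).IsHomogeneous n) ∧ ∑ v ∈ s, monomial v (coeff v F) =
        C c * X (Fin.last d) ^ (n + 1) + ∑ i ∈ Finset.range d, z i * G i := by
    intro s
    induction s using Finset.induction_on with
    | empty => exact fun _ => ⟨0, fun _ => 0, fun _ => isHomogeneous_zero _ _ _, by simp⟩
    | insert v s hv ih =>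
      intro hs
      obtain ⟨c, G, hG, e⟩ := ih ((Finset.subset_insert _ _).trans hs)
      rw [Finset.sum_insert hv, e]
      have hvd : v.degree = n + 1 := by
        have := hF (mem_support_iff.1 (hs (Finset.mem_insert_self v s)))
        rwa [Finsupp.degree_eq_weight_one]
      by_cases hex : ∃ i : Fin d, v i.castSucc ≠ 0
      · obtain ⟨i, hi⟩ := hex
        have hle : Finsupp.single i.castSucc 1 ≤ v := by
          rw [Finsupp.single_le_iff]; omega
        obtain ⟨w, rfl⟩ := le_iff_exists_add.1 hle
        have hw : w.degree = n := by
          rw [map_add, Finsupp.degree_single] at hvd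
          omega
        refine ⟨c, Function.update G i (G i + monomial w (coeff (Finsupp.single i.castSucc 1 + w) F)),
          fun j => ?_, ?_⟩
        · by_cases hj : j = i
          · subst hj
            rw [Function.update_self]
            exact (hG _).add (isHomogeneous_monomial _ hw)
          · rw [Function.update_of_ne hj]; exact hG j
        · have : ∀ j, z j * Function.update G i (G i + monomial w (coeff (Finsupp.single i.castSucc 1 + w) F)) j
              = z j * G j + if j = (i : ℕ) then z i * monomial w (coeff (Finsupp.single i.castSucc 1 + w) F) else 0 := by
            intro j
            by_cases hj : j = i
            · subst hj
              rw [Function.update_self, if_pos rfl, mul_add]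
            · rw [Function.update_of_ne hj, if_neg hj, add_zero]
          simp_rw [this]
          have hm : ∀ b : R, (X i.castSucc : MvPolynomial (Fin (d + 1)) R) * monomial w b =
              monomial (Finsupp.single i.castSucc 1 + w) b := fun b => by
            rw [X, monomial_mul, one_mul]
          rw [Finset.sum_add_distrib, Finset.sum_ite_eq', if_pos (Finset.mem_range.2 i.2), hz,
            hm]
          ring
      · push Not at hex
        have hv2 : v = Finsupp.single (Fin.last d) (n + 1) := by
          have : v = Finsupp.single (Fin.last d) (v (Fin.last d)) := by
            ext j
            refine Fin.lastCases ?_ (fun i => ?_) j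
            · simp
            · rw [hex i, Finsupp.single_eq_of_ne]
              exact (Fin.castSucc_lt_last i).ne
          rw [this, Finsupp.degree_single] at hvd
          rw [this, hvd]
        refine ⟨coeff v F + c, G, hG, ?_⟩
        rw [hv2, ← C_mul_X_pow_eq_monomial, map_add]
        ring
  exact this _ le_rfl

end Aux
universe u
section Aux2
open CategoryTheory Abelian RingTheory.Sequence Pointwise

lemma aux_depth {R : Type u} [CommRing R] [IsNoetherianRing R] [IsLocalRing R]
    (N : ModuleCat.{u} R) [Module.Finite R N]
    (hN : Module.support R N = PrimeSpectrum.zeroLocus (IsLocalRing.maximalIdeal R))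
    (ws : List R) : ∀ (M : ModuleCat.{u} R) [Module.Finite R M] [Nontrivial M]
    (_ : ∀ w ∈ ws, w ∈ IsLocalRing.maximalIdeal R) (_ : IsWeaklyRegular M ws)
    (_ : ∀ i < ws.length + 1, Subsingleton (Ext N M i)),
    ∃ a ∈ IsLocalRing.maximalIdeal R,
      IsSMulRegular (M ⧸ (Ideal.ofList ws • ⊤ : Submodule R M)) a := by
  induction ws with
  | nil =>
    intro M _ _ _ _ h
    have hlt : IsLocalRing.maximalIdeal R • (⊤ : Submodule R M) < ⊤ :=
      (Submodule.top_ne_ideal_smul_of_le_jacobson_annihilator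
        (IsLocalRing.maximalIdeal_le_jacobson _)).symm.lt_top
    obtain ⟨rs, hl, hm, hreg⟩ := ModuleCat.exists_isRegular_of_exists_subsingleton_ext
      (IsLocalRing.maximalIdeal R) 1 M hlt N hN (by simpa using h)
    obtain ⟨a, rfl⟩ := List.length_eq_one_iff.1 hl
    refine ⟨a, hm a (by simp), ?_⟩
    have h1 := ((isRegular_cons_iff _ _ _).1 hreg).1
    have e : (Ideal.ofList ([] : List R) • ⊤ : Submodule R M) = ⊥ := by simp
    exact ((Submodule.quotEquivOfEqBot _ e).isSMulRegular_congr a).2 h1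
  | cons w ws ih =>
    intro M _ _ hw hreg h
    rw [isWeaklyRegular_cons_iff] at hreg
    have hwm : w ∈ IsLocalRing.maximalIdeal R := hw w (by simp)
    have : Nontrivial (QuotSMulTop w M) := nontrivial_quotSMulTop_of_mem_maximalIdeal M hwm
    obtain ⟨a, ha, hr⟩ := ih (ModuleCat.of R (QuotSMulTop w M)) (fun v hv => hw v (by simp [hv]))
      hreg.2 (by
        intro i hi
        have zero1 := AddCommGrpCat.isZero_of_iff_subsingleton.mpr
          (h i (by simp; omega))
        have zero2 := AddCommGrpCat.isZero_of_iff_subsingleton.mpr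
          (h (i + 1) (by simp; omega))
        exact AddCommGrpCat.subsingleton_of_isZero <| ShortComplex.Exact.isZero_of_both_zeros
          ((Ext.covariant_sequence_exact₃' N hreg.1.smulShortComplex_shortExact) i (i + 1) rfl)
          (zero1.eq_zero_of_src _) (zero2.eq_zero_of_tgt _))
    exact ⟨a, ha, ((Submodule.quotOfListConsSMulTopEquivQuotSMulTopInner M w ws).isSMulRegular_congr
      a).2 hr⟩

lemma aux_depth2 {R : Type u} [CommRing R] [IsNoetherianRing R] [IsLocalRing R]
    (zs ws : List R) (hz : ∀ w ∈ zs, w ∈ IsLocalRing.maximalIdeal R) (hzr : IsRegular R zs)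
    (hw : ∀ w ∈ ws, w ∈ IsLocalRing.maximalIdeal R) (hwr : IsWeaklyRegular R ws)
    (hl : ws.length < zs.length) : ∃ a ∈ IsLocalRing.maximalIdeal R,
      ∀ b, a * b ∈ Ideal.ofList ws → b ∈ Ideal.ofList ws := by
  let N := ModuleCat.of R (R ⧸ IsLocalRing.maximalIdeal R)
  have hN : Module.support R N = PrimeSpectrum.zeroLocus (IsLocalRing.maximalIdeal R) := by
    change Module.support R (R ⧸ IsLocalRing.maximalIdeal R) = _
    rw [Module.support_eq_zeroLocus, Ideal.annihilator_quotient]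
  have hlt : IsLocalRing.maximalIdeal R • (⊤ : Submodule R (ModuleCat.of R R)) < ⊤ :=
      (Submodule.top_ne_ideal_smul_of_le_jacobson_annihilator
        (IsLocalRing.maximalIdeal_le_jacobson _)).symm.lt_top
  have hext := ModuleCat.subsingleton_ext_of_exists_isRegular (IsLocalRing.maximalIdeal R) N hN.subset
    (ModuleCat.of R R) hlt zs hz hzr
  obtain ⟨a, ha, h⟩ := aux_depth N hN ws (ModuleCat.of R R) hw hwr
    (fun i hi => hext i (by omega))
  refine ⟨a, ha, fun b hb => ?_⟩
  have := (isSMulRegular_quotient_iff_mem_of_smul_mem _ _).1 h b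
  simp only [smul_eq_mul] at this
  have e : (Ideal.ofList ws * ⊤ : Ideal R) = Ideal.ofList ws := Ideal.mul_top _
  change a * b ∈ Ideal.ofList ws * ⊤ → b ∈ Ideal.ofList ws * ⊤ at this
  rw [e] at this
  exact this hb

lemma aux_last {R : Type*} [CommRing R] [IsNoetherianRing R] [IsLocalRing R]
    (I K : Ideal R) (hI : I.radical = IsLocalRing.maximalIdeal R) (x : R) (n : ℕ)
    (hn : I ^ n ≤ K ⊔ Ideal.span {x})
    (h : ∃ a ∈ IsLocalRing.maximalIdeal R, ∀ b, a * b ∈ K → b ∈ K) :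
    ∀ b, x * b ∈ K → b ∈ K := by
  obtain ⟨a, ha, hab⟩ := h
  by_contra hc
  have hx : x ∉ { r : R | IsSMulRegular (R ⧸ K) r } := fun h => hc
    ((isSMulRegular_quotient_iff_mem_of_smul_mem K x).1 h)
  rw [← Set.mem_compl_iff, ← biUnion_associatedPrimes_eq_compl_regular] at hx
  simp only [Set.mem_iUnion] at hx
  obtain ⟨p, hp, hxp⟩ := hx
  have hpp : p.IsPrime := IsAssociatedPrime.isPrime hp
  have hKp : K ≤ p := by
    have := IsAssociatedPrime.annihilator_le hp
    rwa [Submodule.annihilator_top, Ideal.annihilator_quotient] at this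
  have hIp : I ≤ p := by
    refine hpp.le_of_pow_le (hn.trans (sup_le hKp ?_))
    rw [Ideal.span_singleton_le_iff_mem]; exact hxp
  have hmp : IsLocalRing.maximalIdeal R ≤ p := by
    rw [← hI]; exact hpp.radical_le_iff.2 hIp
  have : a ∈ ⋃ p ∈ associatedPrimes R (R ⧸ K), (p : Set R) := by
    simp only [Set.mem_iUnion]
    exact ⟨p, hp, hmp ha⟩
  rw [biUnion_associatedPrimes_eq_compl_regular] at this
  exact this ((isSMulRegular_quotient_iff_mem_of_smul_mem K a).2 hab)

variable {R : Type*} [CommRing R]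

lemma aux_mon (I A B : Ideal R) (n : ℕ) (L : Ideal (reesAlgebra I)) (hAB : A * B ≤ I ^ n)
    (gen : ∀ a ∈ A, ∀ b ∈ B, ∀ f : reesAlgebra I,
      (f : Polynomial R) = Polynomial.monomial n (a * b) → f ∈ L)
    (e : R) (he : e ∈ A * B) : ∀ f : reesAlgebra I,
      (f : Polynomial R) = Polynomial.monomial n e → f ∈ L := by
  refine Submodule.mul_induction_on' (C := fun e _ => ∀ f : reesAlgebra I,
      (f : Polynomial R) = Polynomial.monomial n e → f ∈ L) gen ?_ he
  intro a ha b hb iha ihb f hf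
  have : f = ⟨Polynomial.monomial n a, reesAlgebra.monomial_mem.2 (hAB ha)⟩ +
      ⟨Polynomial.monomial n b, reesAlgebra.monomial_mem.2 (hAB hb)⟩ := by
    apply Subtype.ext
    rw [hf, map_add]; rfl
  rw [this]
  exact add_mem (iha _ rfl) (ihb _ rfl)

lemma aux_gr1 (I : Ideal R) (n : ℕ) (e : R) (he : e ∈ I ^ (n + 1)) (he' : e ∈ I ^ n) :
    (⟨Polynomial.monomial n e, reesAlgebra.monomial_mem.2 he'⟩ : reesAlgebra I) ∈ grIdeal I := by
  rw [pow_succ'] at he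
  refine aux_mon I I (I ^ n) n _ Ideal.mul_le_right ?_ e he _ rfl
  intro a ha b hb f hf
  have : f =
    algebraMap R (reesAlgebra I) a * ⟨Polynomial.monomial n b, reesAlgebra.monomial_mem.2 hb⟩ := by
    apply Subtype.ext
    rw [hf]
    change _ = Polynomial.C a * Polynomial.monomial n b
    rw [Polynomial.C_mul_monomial]
  rw [this]
  exact Ideal.mul_mem_right _ _ (Ideal.subset_span ⟨a, ha, rfl⟩)

/-- auxiliary ideal -/
def auxL (I K : Ideal R) : Ideal (reesAlgebra I) where
  carrier := {f | ∀ n, (f : Polynomial R).coeff n ∈ K ⊔ I ^ (n + 1)}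
  zero_mem' := fun n => by simp
  add_mem' := fun {a b} ha hb n => by
    change ((a : Polynomial R) + b).coeff n ∈ _
    rw [Polynomial.coeff_add]
    exact add_mem (ha n) (hb n)
  smul_mem' := fun c f hf n => by
    change ((c : Polynomial R) * f).coeff n ∈ _
    rw [Polynomial.coeff_mul]
    refine sum_mem fun p hp => ?_
    have h1 := (mem_reesAlgebra_iff I _).1 c.2 p.1
    obtain ⟨u, hu, v, hv, e⟩ := Submodule.mem_sup.1 (hf p.2)
    rw [← e, mul_add]
    refine Submodule.add_mem_sup (Ideal.mul_mem_left _ _ hu) ?_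
    rw [← Finset.HasAntidiagonal.mem_antidiagonal.1 hp, add_assoc, pow_add]
    exact Ideal.mul_mem_mul h1 hv

lemma aux_T (I K : Ideal R) {ι : Type*} (S : Set ι) (ξ : ι → reesAlgebra I) (x : ι → R)
    (hξ : ∀ i, (ξ i : Polynomial R) = Polynomial.C (x i) * Polynomial.X)
    (hK : K = Ideal.span (x '' S)) (k : ι)
    (hreg : ∀ u : GrRing I, Ideal.Quotient.mk (grIdeal I) (ξ k) * u ∈
      Ideal.span ((fun i => Ideal.Quotient.mk (grIdeal I) (ξ i)) '' S) →
      u ∈ Ideal.span ((fun i => Ideal.Quotient.mk (grIdeal I) (ξ i)) '' S))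
    (n : ℕ) (g : R) (hg : g ∈ I ^ n) (h : x k * g ∈ K * I ^ n ⊔ I ^ (n + 2)) :
    g ∈ K ⊔ I ^ (n + 1) := by
  have hxI : ∀ i, x i ∈ I := fun i => by
    have := (mem_reesAlgebra_iff I _).1 (ξ i).2 1
    simpa [hξ] using this
  have hKI : K ≤ I := by
    rw [hK, Ideal.span_le]; rintro _ ⟨i, -, rfl⟩; exact hxI i
  have hmap : Ideal.span ((fun i => Ideal.Quotient.mk (grIdeal I) (ξ i)) '' S) =
      (Ideal.span (ξ '' S)).map (Ideal.Quotient.mk (grIdeal I)) := by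
    rw [Ideal.map_span, Set.image_image]
  rw [hmap] at hreg
  have hreg' : ∀ u : reesAlgebra I, ξ k * u ∈ Ideal.span (ξ '' S) ⊔ grIdeal I →
      u ∈ Ideal.span (ξ '' S) ⊔ grIdeal I := by
    intro u hu
    have := hreg (Ideal.Quotient.mk (grIdeal I) u)
    rw [← map_mul, ← Ideal.mem_comap, ← Ideal.mem_comap,
      Ideal.comap_map_of_surjective' _ Ideal.Quotient.mk_surjective, Ideal.mk_ker] at this
    exact this hu
  have hKn : ∀ e (he : e ∈ I ^ (n + 1)), e ∈ K * I ^ n →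
      (⟨Polynomial.monomial (n + 1) e, reesAlgebra.monomial_mem.2 he⟩ : reesAlgebra I) ∈
      Ideal.span (ξ '' S) ⊔ grIdeal I := by
    intro e he heK
    refine aux_mon I K (I ^ n) (n + 1) _ (by rw [pow_succ']; exact Ideal.mul_mono_left hKI) ?_ e heK
      _ rfl
    intro a ha b hb
    have ha' := ha
    rw [hK] at ha'
    clear ha
    induction ha' using Submodule.span_induction with
    | mem a h =>
      obtain ⟨i, hi, rfl⟩ := h
      intro f hf
      have : f = ξ i * ⟨Polynomial.monomial n b, reesAlgebra.monomial_mem.2 hb⟩ := by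
        apply Subtype.ext
        change _ = (ξ i : Polynomial R) * Polynomial.monomial n b
        rw [hf, hξ, mul_assoc, Polynomial.X_mul_monomial, Polynomial.C_mul_monomial]
      rw [this]
      exact Submodule.mem_sup_left (Ideal.mul_mem_right _ _ (Ideal.subset_span ⟨i, hi, rfl⟩))
    | zero =>
      intro f hf
      have : f = 0 := by apply Subtype.ext; rw [hf]; simp
      rw [this]; exact zero_mem _
    | add a c ha hc iha ihc =>
      intro f hf
      replace ha : a ∈ K := by rw [hK]; exact ha
      replace hc : c ∈ K := by rw [hK]; exact hc
      have hm : ∀ a ∈ K, a * b ∈ I ^ (n + 1) := fun a ha => by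
        rw [pow_succ']; exact Ideal.mul_mem_mul (hKI ha) hb
      have : f = ⟨Polynomial.monomial (n + 1) (a * b), reesAlgebra.monomial_mem.2 (hm a ha)⟩ +
          ⟨Polynomial.monomial (n + 1) (c * b), reesAlgebra.monomial_mem.2 (hm c hc)⟩ := by
        apply Subtype.ext
        rw [hf, add_mul, map_add]; rfl
      rw [this]
      exact add_mem (iha _ rfl) (ihc _ rfl)
    | smul c a ha iha =>
      intro f hf
      replace ha : a ∈ K := by rw [hK]; exact ha
      have hm : a * b ∈ I ^ (n + 1) := by
        rw [pow_succ']; exact Ideal.mul_mem_mul (hKI ha) hb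
      have : f = algebraMap R (reesAlgebra I) c *
          ⟨Polynomial.monomial (n + 1) (a * b), reesAlgebra.monomial_mem.2 hm⟩ := by
        apply Subtype.ext
        change _ = Polynomial.C c * Polynomial.monomial (n + 1) (a * b)
        rw [hf, Polynomial.C_mul_monomial, smul_eq_mul, mul_assoc]
      rw [this]
      exact Ideal.mul_mem_left _ _ (iha _ rfl)
  have h1 : ξ k * ⟨Polynomial.monomial n g, reesAlgebra.monomial_mem.2 hg⟩ ∈
      Ideal.span (ξ '' S) ⊔ grIdeal I := by
    obtain ⟨u, hu, v, hv, e⟩ := Submodule.mem_sup.1 h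
    have hu' : u ∈ I ^ (n + 1) := by
      rw [pow_succ']; exact Ideal.mul_mono_left hKI hu
    have hv' : v ∈ I ^ (n + 1) := Ideal.pow_le_pow_right (by omega) hv
    have : ξ k * ⟨Polynomial.monomial n g, reesAlgebra.monomial_mem.2 hg⟩ =
      ⟨Polynomial.monomial (n + 1) u, reesAlgebra.monomial_mem.2 hu'⟩ +
      ⟨Polynomial.monomial (n + 1) v, reesAlgebra.monomial_mem.2 hv'⟩ := by
      apply Subtype.ext
      change (ξ k : Polynomial R) * Polynomial.monomial n g = Polynomial.monomial (n + 1) u + Polynomial.monomial (n + 1) v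
      rw [hξ, ← map_add, e, mul_assoc, Polynomial.X_mul_monomial, Polynomial.C_mul_monomial]
    rw [this]
    exact add_mem (hKn u hu' hu) (Submodule.mem_sup_right (aux_gr1 I _ v hv hv'))
  have h2 : Ideal.span (ξ '' S) ⊔ grIdeal I ≤ auxL I K := by
    refine sup_le (Ideal.span_le.2 ?_) (Ideal.span_le.2 ?_)
    · rintro _ ⟨i, hi, rfl⟩ m
      rw [hξ]
      refine Submodule.mem_sup_left ?_
      rw [Polynomial.coeff_C_mul]
      refine Ideal.mul_mem_right _ _ ?_
      rw [hK]; exact Ideal.subset_span ⟨i, hi, rfl⟩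
    · rintro _ ⟨i, hi, rfl⟩ m
      change (Polynomial.C i).coeff m ∈ _
      rw [Polynomial.coeff_C]
      split_ifs with hm
      · subst hm; refine Submodule.mem_sup_right ?_; simpa using hi
      · simp
  have h3 := h2 (hreg' _ h1) n
  change (Polynomial.monomial n g).coeff n ∈ _ at h3
  rwa [Polynomial.coeff_monomial, if_pos rfl] at h3

end Aux2
section Aux3
variable {R : Type*} [CommRing R]

lemma aux_list {S : Type*} [CommRing S] {d : ℕ} (f : Fin d → S) (k : ℕ) :
    Ideal.ofList ((List.ofFn f).take k) = Ideal.span (f '' {i | i.val < k}) := by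
  unfold Ideal.ofList
  congr 1
  ext a
  simp only [List.mem_take_iff_getElem, List.getElem_ofFn, List.length_ofFn, Set.mem_image,
    Set.mem_ofPred_eq]
  constructor
  · rintro ⟨i, hi, rfl⟩
    exact ⟨⟨i, by omega⟩, by simp; omega, rfl⟩
  · rintro ⟨i, hi, rfl⟩
    exact ⟨i, by have := i.2; omega, rfl⟩

lemma aux_core [IsNoetherianRing R] [IsLocalRing R]
    (d : ℕ) (I : Ideal R) (x : ℕ → R) (y : R) (r : ℕ) (Jk : ℕ → Ideal R) (h0 : Jk 0 = ⊥)
    (hs : ∀ k, Jk (k + 1) = Jk k ⊔ Ideal.span {x k}) (hx : ∀ k, x k ∈ I)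
    (hJI : Jk d ≤ I) (hxJ : ∀ k < d, x k ∈ Jk d)
    (g : Fin (d + 1) → R) (hgy : g (Fin.last d) = y)
    (z : ℕ → MvPolynomial (Fin (d + 1)) R)
    (hz : ∀ i : Fin d, z i = X i.castSucc) (hz1 : ∀ i, (z i).IsHomogeneous 1)
    (hzx : ∀ i, eval g (z i) = x i)
    (hgen : I = Ideal.span (Set.range g)) (hIJ : I ≠ Jk d)
    (hred : IsLeast {k : ℕ | I ^ (k + 1) = Jk d * I ^ k} r)
    (A : ∀ n, ∀ k < d, ∀ a ∈ I ^ (n + 1), x k * a ∈ Jk k → a ∈ Jk k * I ^ n) :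
    (∃ F : ℕ → MvPolynomial (Fin (d + 1)) R, (∀ i, (F i).IsHomogeneous r) ∧
      (X (Fin.last d) ^ (r + 1) - ∑ i ∈ Finset.range d, z i * F i) ∈ presKer g ∧
      presKer g
        = Ideal.span {X (Fin.last d) ^ (r + 1) - ∑ i ∈ Finset.range d, z i * F i}
            ⊔ presKerLe g r) ∧
    IsLeast {N : ℕ | 1 ≤ N ∧ presKer g = presKerLe g N} (r + 1) := by
  have hr : r ≠ 0 := by
    rintro rfl
    have := hred.1
    simp only [Set.mem_ofPred_eq, zero_add, pow_one, pow_zero, Ideal.one_eq_top, Ideal.mul_top] at this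
    exact hIJ this
  have lift : ∀ n a, a ∈ I ^ n ↔ ∃ H : MvPolynomial (Fin (d + 1)) R, H.IsHomogeneous n ∧ eval g H = a :=
    fun n a => by rw [hgen, Ideal.mem_span_pow_iff_exists_isHomogeneous]
  have hle : ∀ N, presKerLe g N ≤ presKer g := fun N => Ideal.span_le.2 fun F hF => hF.1
  have hsumJ : ∀ n (G : ℕ → MvPolynomial (Fin (d + 1)) R), (∀ i, (G i).IsHomogeneous n) →
      eval g (∑ i ∈ Finset.range d, z i * G i) ∈ Jk d * I ^ n := by
    intro n G hG
    rw [map_sum]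
    refine sum_mem fun i hi => ?_
    rw [map_mul, hzx]
    exact Ideal.mul_mem_mul (hxJ i (Finset.mem_range.1 hi)) ((lift _ _).2 ⟨G i, hG i, rfl⟩)
  -- the form
  have hyI : y ^ (r + 1) ∈ Jk d * I ^ r := by
    have e : I ^ (r + 1) = Jk d * I ^ r := hred.1
    rw [← e]
    exact (lift _ _).2 ⟨X (Fin.last d) ^ (r + 1), isHomogeneous_X_pow _ _, by simp [hgy]⟩
  obtain ⟨a, ha, hya⟩ := aux_memJk x Jk h0 hs (I ^ r) d _ hyI
  choose F hF hFa using fun i => (lift r (a i)).1 (ha i)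
  have hzF : ∀ n (G : ℕ → MvPolynomial (Fin (d + 1)) R), (∀ i, (G i).IsHomogeneous n) →
      (∑ i ∈ Finset.range d, z i * G i).IsHomogeneous (n + 1) := by
    intro n G hG
    refine IsHomogeneous.sum _ _ _ fun i _ => ?_
    rw [add_comm n 1]; exact (hz1 i).mul (hG i)
  set P := X (Fin.last d) ^ (r + 1) - ∑ i ∈ Finset.range d, z i * F i with hP
  have hPh : P.IsHomogeneous (r + 1) :=
    (isHomogeneous_X_pow _ _).sub (hzF r F hF)
  have hPQ : P ∈ presKer g := by
    rw [aux_memQ g _ _ hPh, hP, map_sub, map_pow, eval_X, hgy, hya, map_sum]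
    simp_rw [map_mul, hzx, hFa, sub_self]
  -- main induction
  have main : ∀ n (F : MvPolynomial (Fin (d + 1)) R), F.IsHomogeneous n → F ∈ presKer g →
      F ∈ Ideal.span {P} ⊔ presKerLe g r := by
    intro n
    induction n using Nat.strong_induction_on with
    | _ n ih =>
    intro H hH hHQ
    by_cases hn : n ≤ r
    · exact Submodule.mem_sup_right (Ideal.subset_span ⟨hHQ, n, hn, hH⟩)
    obtain ⟨m, rfl⟩ : ∃ m, n = m + 1 + 1 := ⟨n - 2, by omega⟩
    obtain ⟨c, G, hG, e⟩ := aux_decomp z hz (m + 1) H hH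
    have e2 : H = C c * X (Fin.last d) ^ (m + 1 - r) * P +
        ∑ i ∈ Finset.range d, z i * (G i + C c * X (Fin.last d) ^ (m + 1 - r) * F i) := by
      have : ∑ i ∈ Finset.range d, z i * (G i + C c * X (Fin.last d) ^ (m + 1 - r) * F i) =
        ∑ i ∈ Finset.range d, z i * G i +
          C c * X (Fin.last d) ^ (m + 1 - r) * ∑ i ∈ Finset.range d, z i * F i := by
        rw [Finset.mul_sum, ← Finset.sum_add_distrib]
        exact Finset.sum_congr rfl fun i _ => by ring
      rw [this, e, hP, mul_sub, mul_assoc, ← pow_add,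
        show m + 1 - r + (r + 1) = m + 1 + 1 by omega]
      ring
    have hG' : ∀ i, (G i + C c * X (Fin.last d) ^ (m + 1 - r) * F i).IsHomogeneous (m + 1) := by
      intro i
      refine (hG i).add ?_
      have := ((isHomogeneous_C (Fin (d + 1)) c).mul
        (isHomogeneous_X_pow (R := R) (Fin.last d) (m + 1 - r))).mul (hF i)
      rwa [show 0 + (m + 1 - r) + r = m + 1 by omega] at this
    have hPm : C c * X (Fin.last d) ^ (m + 1 - r) * P ∈ Ideal.span {P} :=
      Ideal.mul_mem_left _ _ (Ideal.mem_span_singleton_self _)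
    rw [e2]
    refine add_mem (Submodule.mem_sup_left hPm) ?_
    have h1 : ∑ i ∈ Finset.range d, z i * (G i + C c * X (Fin.last d) ^ (m + 1 - r) * F i) ∈
        presKer g := by
      have : ∑ i ∈ Finset.range d, z i * (G i + C c * X (Fin.last d) ^ (m + 1 - r) * F i) =
        H - C c * X (Fin.last d) ^ (m + 1 - r) * P := by rw [e2]; ring
      rw [this]
      exact sub_mem hHQ (Ideal.mul_mem_left _ _ hPQ)
    rw [aux_memQ g _ _ (hzF _ _ hG')] at h1
    have h2 := aux_syz g I hgen x Jk hs z hz1 hzx d m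
      (fun k hk a ha hka => aux_memJk x Jk h0 hs _ k _ (A m k hk a ha hka)) d le_rfl _ hG' h1
    refine (Ideal.span_le.2 ?_ : presKerLe g (m + 1) ≤ _) h2
    rintro K ⟨hK, k, hk, hKh⟩
    exact ih k (by omega) K hKh hK
  have hQ : presKer g = Ideal.span {P} ⊔ presKerLe g r := by
    refine le_antisymm (fun H hH => ?_) (sup_le ?_ (hle r))
    · rw [← sum_homogeneousComponent H]
      exact sum_mem fun i _ => main i _ (homogeneousComponent_isHomogeneous i H) (aux_compQ g H hH i)
    · rw [Ideal.span_singleton_le_iff_mem]; exact hPQ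
  refine ⟨⟨F, hF, hPQ, hQ⟩, ⟨by omega, ?_⟩, ?_⟩
  · refine le_antisymm ?_ (hle _)
    rw [hQ]
    refine sup_le ?_ (Ideal.span_mono ?_)
    · rw [Ideal.span_singleton_le_iff_mem]
      exact Ideal.subset_span ⟨hPQ, r + 1, le_rfl, hPh⟩
    · rintro K ⟨hK, k, hk, hKh⟩
      exact ⟨hK, k, by omega, hKh⟩
  · rintro N ⟨-, hN⟩
    by_contra hlt
    have hNr : N ≤ r := by omega
    let ψ : MvPolynomial (Fin (d + 1)) R →+* IsLocalRing.ResidueField R :=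
      eval₂Hom (IsLocalRing.residue R) (fun i => if i = Fin.last d then 1 else 0)
    have hψz : ∀ G : ℕ → MvPolynomial (Fin (d + 1)) R,
        ψ (∑ i ∈ Finset.range d, z i * G i) = 0 := by
      intro G
      rw [map_sum]
      refine Finset.sum_eq_zero fun i hi => ?_
      have := hz ⟨i, Finset.mem_range.1 hi⟩
      dsimp only at this
      rw [this, map_mul]
      have : ψ (X (Fin.castSucc ⟨i, Finset.mem_range.1 hi⟩)) = 0 := by
        simp only [ψ, eval₂Hom_X']
        rw [if_neg (Fin.castSucc_lt_last _).ne]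
      rw [this, zero_mul]
    have hψY : ψ (X (Fin.last d)) = 1 := by simp [ψ]
    have hψP : ψ P = 1 := by
      rw [hP, map_sub, hψz, map_pow, hψY, one_pow, sub_zero]
    have hker : presKerLe g N ≤ RingHom.ker ψ := by
      refine Ideal.span_le.2 ?_
      rintro H ⟨hHQ, k, hk, hH⟩
      change ψ H = 0
      rw [aux_memQ g k H hH] at hHQ
      cases k with
      | zero =>
        rw [← totalDegree_zero_iff_isHomogeneous, totalDegree_eq_zero_iff_eq_C] at hH
        rw [hH, eval_C] at hHQ
        rw [hH, hHQ]; simp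
      | succ n =>
        obtain ⟨c, G, hG, e⟩ := aux_decomp z hz n H hH
        have h1 : ψ H = IsLocalRing.residue R c := by
          rw [e, map_add, hψz, map_mul, map_pow, hψY]; simp [ψ]
        rw [h1]
        by_contra hc
        have hcu : IsUnit c := by
          by_contra hcn
          exact hc ((IsLocalRing.residue_eq_zero_iff c).2 ((IsLocalRing.mem_maximalIdeal c).2 hcn))
        have hy : y ^ (n + 1) ∈ Jk d * I ^ n := by
          rw [e, map_add, map_mul, eval_C, map_pow, eval_X, hgy, add_eq_zero_iff_eq_neg] at hHQ
          rw [← Ideal.unit_mul_mem_iff_mem _ hcu, hHQ]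
          exact neg_mem (hsumJ n G hG)
        have : n ∈ {k : ℕ | I ^ (k + 1) = Jk d * I ^ k} := by
          refine le_antisymm ?_ ?_
          · intro b hb
            obtain ⟨B, hB, rfl⟩ := (lift _ _).1 hb
            obtain ⟨c, G, hG, e⟩ := aux_decomp z hz n B hB
            rw [e, map_add, map_mul, eval_C, map_pow, eval_X, hgy]
            exact add_mem (Ideal.mul_mem_left _ _ hy) (hsumJ n G hG)
          · rw [pow_succ']; exact Ideal.mul_mono_left hJI
        have := hred.2 this
        omega
    have := hker (hN ▸ hPQ)
    rw [RingHom.mem_ker, hψP] at this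
    exact one_ne_zero this

end Aux3

/-- Let `(R,m)` be a Cohen–Macaulay local ring of dimension `d` (encoded by
`dim R = d` together with the existence of a regular sequence of length `d` in `m`),
`I` an `m`-primary ideal with minimal generating set `x₁,…,x_d,y`, `J = (x₁,…,x_d)` a
reduction of `I` with reduction number `r`, and suppose the initial forms
`x₁*,…,x_{d-1}*` form a `gr_I(R)`-regular sequence.  Then
`Q = (Y^{r+1} − ∑ Xᵢ Fᵢ) + Q⟨r⟩` for forms `Fᵢ` of degree `r`; in particular
`rt(I) = r + 1`. -/
theorem statement5 {R : Type*} [CommRing R] [IsNoetherianRing R] [IsLocalRing R]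
    (d : ℕ) (hdim : ringKrullDim R = (d : WithBot (WithTop ℕ)))
    (hCM : ∃ z : Fin d → R, (∀ i, z i ∈ IsLocalRing.maximalIdeal R) ∧
      RingTheory.Sequence.IsRegular R (List.ofFn z))
    (I : Ideal R) (hprim : I.radical = IsLocalRing.maximalIdeal R)
    (x : Fin d → R) (y : R) (r : ℕ)
    (J : Ideal R) (hJ : J = Ideal.span (Set.range x))
    (hgen : I = Ideal.span (Set.range (Fin.snoc x y)))
    (hmin : ∀ i : Fin (d + 1), I ≠ Ideal.span (Fin.snoc x y '' {j | j ≠ i}))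
    (hred : IsLeast {k : ℕ | I ^ (k + 1) = J * I ^ k} r)
    (ξ : Fin d → reesAlgebra I)
    (hξ : ∀ i, (ξ i : Polynomial R) = Polynomial.C (x i) * Polynomial.X)
    (hgrreg : RingTheory.Sequence.IsRegular (GrRing I)
      ((List.ofFn fun i => Ideal.Quotient.mk (grIdeal I) (ξ i)).take (d - 1))) :
    (∃ F : Fin d → MvPolynomial (Fin (d + 1)) R, (∀ i, (F i).IsHomogeneous r) ∧
      (X (Fin.last d) ^ (r + 1) - ∑ i, X i.castSucc * F i) ∈ presKer (Fin.snoc x y) ∧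
      presKer (Fin.snoc x y)
        = Ideal.span {X (Fin.last d) ^ (r + 1) - ∑ i, X i.castSucc * F i}
            ⊔ presKerLe (Fin.snoc x y) r) ∧
    IsLeast {N : ℕ | 1 ≤ N ∧ presKer (Fin.snoc x y) = presKerLe (Fin.snoc x y) N} (r + 1) := by
  classical
  obtain ⟨zz, hzm, hzr⟩ := hCM
  have hIne : I ≠ ⊤ := by
    rintro rfl
    rw [Ideal.radical_top] at hprim
    exact IsLocalRing.maximalIdeal.isMaximal R |>.ne_top hprim.symm
  have hIm : I ≤ IsLocalRing.maximalIdeal R := IsLocalRing.le_maximalIdeal hIne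
  have hxI : ∀ i, x i ∈ I := fun i => by
    rw [hgen]; exact Ideal.subset_span ⟨i.castSucc, by simp⟩
  let x' : ℕ → R := fun i => if h : i < d then x ⟨i, h⟩ else 0
  let z : ℕ → MvPolynomial (Fin (d + 1)) R :=
    fun i => if h : i < d then X (Fin.castSucc ⟨i, h⟩) else 0
  let Jk : ℕ → Ideal R := fun k => Ideal.span (x '' {i | i.val < k})
  have hx' : ∀ i : Fin d, x' i = x i := fun i => by simp [x']
  have hz : ∀ i : Fin d, z i = X i.castSucc := fun i => dif_pos i.2
  have h0 : Jk 0 = ⊥ := by simp [Jk]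
  have hs : ∀ k, Jk (k + 1) = Jk k ⊔ Ideal.span {x' k} := by
    intro k
    by_cases hk : k < d
    · have : {i : Fin d | i.val < k + 1} = {i : Fin d | i.val < k} ∪ {⟨k, hk⟩} := by
        ext i
        simp only [Set.mem_ofPred_eq, Set.mem_union, Set.mem_singleton_iff, Fin.ext_iff]
        omega
      simp only [Jk]
      rw [this, Set.image_union, Ideal.span_union, Set.image_singleton, ← hx' ⟨k, hk⟩]
    · have : {i : Fin d | i.val < k + 1} = {i : Fin d | i.val < k} := by
        ext i
        have := i.2
        simp only [Set.mem_ofPred_eq]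
        omega
      simp only [Jk]
      rw [this]
      simp [x', hk]
  have hJd : J = Jk d := by
    rw [hJ]
    simp [Jk]
  have hx'I : ∀ k, x' k ∈ I := fun k => by
    simp only [x']; split_ifs; exacts [hxI _, zero_mem _]
  have hJkI : ∀ k, Jk k ≤ I := fun k => by
    refine Ideal.span_le.2 ?_
    rintro _ ⟨i, -, rfl⟩
    exact hxI i
  have T : ∀ k < d - 1, ∀ n, ∀ g ∈ I ^ n, x' k * g ∈ Jk k * I ^ n ⊔ I ^ (n + 2) →
      g ∈ Jk k ⊔ I ^ (n + 1) := by
    intro k hk n g hg h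
    have hk' : k < d := by omega
    rw [show x' k = x ⟨k, hk'⟩ from hx' ⟨k, hk'⟩] at h
    refine aux_T I (Jk k) {i : Fin d | i.val < k} ξ x hξ rfl ⟨k, hk'⟩ ?_ n g hg h
    have h1 := hgrreg.regular_mod_prev k (by simp; omega)
    rw [isSMulRegular_quotient_iff_mem_of_smul_mem, List.take_take, min_eq_left hk.le, aux_list] at h1
    simpa only [smul_eq_mul, Ideal.mul_top, List.getElem_take, List.getElem_ofFn] using h1
  have VV := aux_VV I hIne x' Jk h0 hs hx'I (d - 1) T
  have hlast : ∀ k < d, ∀ b, x' k * b ∈ Jk k → b ∈ Jk k := by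
    intro k hk
    by_cases hk1 : k < d - 1
    · exact (VV (d - 1) le_rfl).2 k hk1
    have hkd : k + 1 = d := by omega
    refine aux_last I (Jk k) hprim (x' k) (r + 1) ?_ ?_
    · rw [← hs, hkd, ← hJd]
      have : I ^ (r + 1) = J * I ^ r := hred.1
      rw [this]
      exact Ideal.mul_le_left
    · have e : Jk k = Ideal.ofList ((List.ofFn x).take k) := (aux_list x k).symm
      rw [e]
      refine aux_depth2 (List.ofFn zz) _ ?_ hzr ?_ ?_ ?_
      · intro w hw
        obtain ⟨i, rfl⟩ := (List.mem_ofFn' _ _).1 hw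
        exact hzm i
      · intro w hw
        obtain ⟨i, rfl⟩ := (List.mem_ofFn' _ _).1 (List.mem_of_mem_take hw)
        exact hIm (hxI i)
      · constructor
        intro i hi
        have hi' : i < k := by simp at hi; omega
        rw [isSMulRegular_quotient_iff_mem_of_smul_mem, List.take_take, min_eq_left hi'.le, aux_list]
        have := (VV (d - 1) le_rfl).2 i (by omega)
        simp only [x', dif_pos (show i < d by omega)] at this
        simpa only [smul_eq_mul, Ideal.mul_top, List.getElem_take, List.getElem_ofFn] using this
      · simp; omega
  have core := aux_core d I x' y r Jk h0 hs hx'I (hJkI d)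
    (fun k hk => Ideal.subset_span ⟨⟨k, hk⟩, hk, (hx' ⟨k, hk⟩).symm⟩)
    (Fin.snoc x y) (by simp) z hz
    (fun i => by simp only [z]; split_ifs; exacts [isHomogeneous_X _ _, isHomogeneous_zero _ _ _])
    (fun i => by
      simp only [z, x']
      split_ifs with h
      · rw [eval_X]; exact Fin.snoc_castSucc (α := fun _ => R) y x ⟨i, h⟩
      · simp) hgen
    (by
      intro h
      refine hmin (Fin.last d) ?_
      rw [h, ← hJd, hJ]
      congr 1
      ext a
      constructor
      · rintro ⟨i, rfl⟩
        exact ⟨i.castSucc, (Fin.castSucc_lt_last i).ne, by simp⟩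
      · rintro ⟨j, hj, rfl⟩
        obtain ⟨i, rfl⟩ := Fin.exists_castSucc_eq.2 hj
        exact ⟨i, by simp⟩)
    (hJd ▸ hred)
    (fun n k hk a ha hka => (VV k (by omega)).1 n a (hlast k hk a hka) ha)
  obtain ⟨⟨F, hF, h1, h2⟩, h3⟩ := core
  have hsum : ∑ i ∈ Finset.range d, z i * F i = ∑ i : Fin d, X i.castSucc * F i := by
    rw [← Fin.sum_univ_eq_sum_range (fun i => z i * F i)]
    exact Finset.sum_congr rfl fun i _ => by rw [hz]
  rw [hsum] at h1 h2
  exact ⟨⟨fun i => F i, fun i => hF i, h1, h2⟩, h3⟩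
end
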